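/- arXiv:2407.14869 — 5 statements merged into one kernel-verified Lean document; each statement's English description precedes it below -/
import Mathlib

section
/- Let A ⊆ ℕ be a computable infinite set and B ⊆ ℕ an infinite set, and let α = Σ_{n∈A} 2^{−(n+1)} and β = Σ_{n∈B} 2^{−(n+1)} be the reals whose binary expansions are the characteristic functions of A and B respectively. If α is total-Solovay reducible to β, then B is not hyperimmune. -/
/-- The real `0.A` whose binary expansion is the characteristic function of `A ⊆ ℕ`,
i.e. `∑_{n ∈ A} 2^{-(n+1)}`. -/
noncomputable def binReal (A : Set ℕ) : ℝ :=
  ∑' n : ℕ, Set.indicator A (fun n => (2 : ℝ)⁻¹ ^ (n + 1)) n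

/-- An (infinite) set `B ⊆ ℕ` is hyperimmune if its principal function `p_B = Nat.nth (· ∈ B)`
is not majorized by any computable function. -/
def Hyperimmune (B : Set ℕ) : Prop :=
  ¬ ∃ g : ℕ → ℕ, Computable g ∧ ∀ n, Nat.nth (· ∈ B) n ≤ g n

/-- Total Solovay reducibility: `α ≤_S^tot β`. -/
def TotalSolovayReducible (α β : ℝ) : Prop :=
  ∃ c : ℚ, 0 < c ∧ ∃ f : ℚ → ℚ, Computable f ∧
    ∀ q : ℚ, (q : ℝ) < β → (f q : ℝ) < α ∧ α - (f q : ℝ) < (c : ℝ) * (β - (q : ℝ))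

open Encodable in
theorem aux_search {α : Type*} [Primcodable α] (P : α → ℕ → Bool) (hP : Computable₂ P)
    (hex : ∀ a, ∃ n, P a n = true) : ∃ F : α → ℕ, Computable F ∧ ∀ a, P a (F a) = true := by
  refine ⟨fun a => Nat.find (hex a), ?_, fun a => Nat.find_spec (hex a)⟩
  have h : Partrec₂ (fun a n => (Part.some (P a n) : Part Bool)) := hP
  refine (Partrec.rfind h).of_eq_tot fun a => ?_
  refine Nat.mem_rfind.2 ⟨by simpa using (Nat.find_spec (hex a)).symm, fun {m} hm => ?_⟩
  have := Nat.find_min (hex a) hm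
  simpa using this

/-- the underlying code of a rational -/
def ratE (q : ℚ) : ℕ := Nat.pair (Encodable.encode q.num) q.den

theorem ratE_inj : Function.Injective ratE := by
  intro p q h
  rw [ratE, ratE, Nat.pair_eq_pair] at h
  exact Rat.ext (Encodable.encode_injective h.1) h.2

open Encodable in
theorem encode_int_cases (z : ℤ) : (encode z + 1) / 2 = z.natAbs ∧
    (if encode z % 2 = 0 then encode z / 2 else 0) = z.toNat := by
  cases z with
  | ofNat n =>
    have : encode (Int.ofNat n) = 2 * n := rfl
    rw [this]; simp; omega
  | negSucc n =>
    have : encode (Int.negSucc n) = 2 * n + 1 := rfl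
    rw [this]
    have h1 : (2 * n + 1) % 2 = 1 := by omega
    simp [h1]; omega

theorem mem_range_ratE (k : ℕ) : k ∈ Set.range ratE ↔
    0 < k.unpair.2 ∧ ∀ y < k.unpair.2 + 1,
      (y < 2 ∨ ¬ (((k.unpair.1 + 1) / 2) % y = 0 ∧ k.unpair.2 % y = 0)) := by
  constructor
  · rintro ⟨q, rfl⟩
    simp only [ratE, Nat.unpair_pair]
    refine ⟨q.den_pos, fun y hy => ?_⟩
    rw [(encode_int_cases q.num).1]
    by_contra! h
    obtain ⟨h2, h3, h4⟩ := h
    have := Nat.dvd_gcd (Nat.dvd_of_mod_eq_zero h3) (Nat.dvd_of_mod_eq_zero h4)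
    rw [q.reduced] at this
    have := Nat.le_of_dvd one_pos this
    omega
  · rintro ⟨h1, h2⟩
    obtain ⟨z, hz⟩ : ∃ z : ℤ, Encodable.encode z = k.unpair.1 :=
      ⟨Denumerable.ofNat ℤ _, Denumerable.encode_ofNat _⟩
    have hc : z.natAbs.Coprime k.unpair.2 := by
      rw [← (encode_int_cases z).1, hz]
      by_contra hne
      have hle := Nat.le_of_dvd h1 (Nat.gcd_dvd_right ((k.unpair.1 + 1) / 2) k.unpair.2)
      have hpos := Nat.gcd_pos_of_pos_right ((k.unpair.1 + 1) / 2) h1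
      rcases h2 (Nat.gcd ((k.unpair.1 + 1) / 2) k.unpair.2) (by omega) with h | h
      · exact hne (by rw [Nat.Coprime]; omega)
      · exact h ⟨Nat.mod_eq_zero_of_dvd (Nat.gcd_dvd_left _ _),
          Nat.mod_eq_zero_of_dvd (Nat.gcd_dvd_right _ _)⟩
    refine ⟨⟨z, k.unpair.2, h1.ne', hc⟩, ?_⟩
    simp [ratE, hz]

theorem primrec_range : PrimrecPred (fun k => k ∈ Set.range ratE) := by
  have hu1 : Primrec fun k : ℕ => k.unpair.1 := Primrec.fst.comp Primrec.unpair
  have hu2 : Primrec fun k : ℕ => k.unpair.2 := Primrec.snd.comp Primrec.unpair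
  have habs : Primrec fun k : ℕ => (k.unpair.1 + 1) / 2 :=
    Primrec.nat_div.comp (Primrec.succ.comp hu1) (Primrec.const 2)
  have hR : PrimrecRel fun y k : ℕ =>
      (y < 2 ∨ ¬ (((k.unpair.1 + 1) / 2) % y = 0 ∧ k.unpair.2 % y = 0)) := by
    refine PrimrecPred.or (Primrec.nat_lt.comp Primrec.fst (Primrec.const 2))
      (PrimrecPred.not (PrimrecPred.and ?_ ?_))
    · exact Primrec.eq.comp (Primrec.nat_mod.comp (habs.comp Primrec.snd) Primrec.fst)
        (Primrec.const 0)
    · exact Primrec.eq.comp (Primrec.nat_mod.comp (hu2.comp Primrec.snd) Primrec.fst)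
        (Primrec.const 0)
  have h1 := (PrimrecRel.forall_lt hR).comp (Primrec.succ.comp hu2) Primrec.id
  exact (PrimrecPred.and (Primrec.nat_lt.comp (Primrec.const 0) hu2) h1).of_eq
    fun k => (mem_range_ratE k).symm

open Classical in
theorem encode_rat (q : ℚ) : (@Encodable.encode ℚ Primcodable.toEncodable q) =
    Nat.count (fun k => k ∈ Set.range ratE) (ratE q) := by
  have : (@Encodable.encode ℚ Primcodable.toEncodable q) =
    (List.range (@Encodable.encode ℚ Rat.instEncodable q)).countP
      (fun k => @decide (k ∈ Set.range (@Encodable.encode ℚ Rat.instEncodable))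
        (@Encodable.decidableRangeEncode ℚ Rat.instEncodable k)) := rfl
  rw [this, Nat.count]
  have h2 : @Encodable.encode ℚ Rat.instEncodable = ratE := rfl
  simp only [h2]

theorem computable_ratE : Computable ratE := by
  classical
  have hS := primrec_range.decide
  have hcount : Primrec (Nat.count (fun k => k ∈ Set.range ratE)) := by
    have : Primrec fun n : ℕ => (n.rec (motive := fun _ => ℕ) 0 fun k IH =>
        IH + if k ∈ Set.range ratE then 1 else 0 : ℕ) :=
      Primrec.nat_rec₁ 0 (Primrec.nat_add.comp Primrec.snd
        (Primrec.ite (primrec_range.comp Primrec.fst) (Primrec.const 1) (Primrec.const 0)))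
    refine this.of_eq fun n => ?_
    induction n with
    | zero => simp
    | succ n ih => rw [Nat.count_succ, ← ih]
  have hP : Computable₂ (fun (q : ℚ) (k : ℕ) =>
      decide (k ∈ Set.range ratE ∧ Nat.count (fun k => k ∈ Set.range ratE) k =
        (@Encodable.encode ℚ Primcodable.toEncodable q))) := by
    apply Primrec.to_comp
    refine PrimrecPred.decide (PrimrecPred.and (primrec_range.comp Primrec.snd)
      (Primrec.eq.comp (hcount.comp Primrec.snd) (Primrec.encode.comp Primrec.fst)))
  obtain ⟨F, hF, hF2⟩ := aux_search _ hP (fun q => ⟨ratE q, by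
    simp [encode_rat]⟩)
  refine hF.of_eq fun q => ?_
  have h := hF2 q
  simp only [decide_eq_true_eq] at h
  obtain ⟨⟨q', hq'⟩, h2⟩ := h
  rw [← hq', ← encode_rat] at h2
  rw [← hq', @Encodable.encode_injective ℚ Primcodable.toEncodable _ _ h2]

theorem computable_den : Computable (fun q : ℚ => q.den) :=
  (Computable.snd.comp (Computable.unpair.comp computable_ratE)).of_eq fun q => by simp [ratE]

theorem computable_num : Computable (fun q : ℚ => q.num.toNat) := by
  have h1 : Primrec (fun a : ℕ => if a % 2 = 0 then a / 2 else 0) :=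
    Primrec.ite (Primrec.eq.comp (Primrec.nat_mod.comp Primrec.id (Primrec.const 2))
      (Primrec.const 0)) (Primrec.nat_div.comp Primrec.id (Primrec.const 2)) (Primrec.const 0)
  refine (h1.to_comp.comp (Computable.fst.comp (Computable.unpair.comp computable_ratE))).of_eq
    fun q => ?_
  simp only [ratE, Nat.unpair_pair]
  exact (encode_int_cases q.num).2

open Classical in
/-- truncated expansion as a natural number -/
noncomputable def trunc (A : Set ℕ) : ℕ → ℕ
  | 0 => 0
  | k + 1 => 2 * trunc A k + if k ∈ A then 1 else 0

theorem trunc_computable (A : Set ℕ) (hA : ComputablePred (· ∈ A)) : Computable (trunc A) := by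
  classical
  obtain ⟨_, hA⟩ := hA
  have : Computable fun n : ℕ => (n.rec (motive := fun _ => ℕ) 0 fun k IH =>
      2 * IH + bif decide (k ∈ A) then 1 else 0 : ℕ) := by
    refine Computable.nat_rec (f := fun n : ℕ => n) (g := fun _ => 0)
      (h := fun _ (p : ℕ × ℕ) => 2 * p.2 + bif decide (p.1 ∈ A) then 1 else 0)
      Computable.id (Computable.const 0) ?_
    show Computable (fun x : ℕ × (ℕ × ℕ) => 2 * x.2.2 + bif decide (x.2.1 ∈ A) then 1 else 0)
    refine (Primrec.nat_add.to_comp.comp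
      (Primrec.nat_mul.to_comp.comp (Computable.const 2)
        ((Computable.snd (α := ℕ) (β := ℕ)).comp (Computable.snd (α := ℕ)))) ?_)
    refine Computable.cond ?_ (Computable.const 1) (Computable.const 0)
    refine (hA.comp (Computable.fst.comp Computable.snd)).of_eq fun a => ?_
    congr!
  refine this.of_eq fun n => ?_
  induction n with
  | zero => rfl
  | succ n ih =>
    rw [trunc, ← ih]
    by_cases h : n ∈ A <;> simp [h]

theorem trunc_sum (A : Set ℕ) (k : ℕ) :
    ∑ n ∈ Finset.range k, Set.indicator A (fun n => (2 : ℝ)⁻¹ ^ (n + 1)) n = trunc A k / 2 ^ k := by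
  induction k with
  | zero => simp [trunc]
  | succ k ih =>
    rw [Finset.sum_range_succ, ih, trunc]
    by_cases h : k ∈ A <;> simp [h] <;> field_simp <;> ring

theorem trunc_lt (A : Set ℕ) (k : ℕ) : trunc A k < 2 ^ k := by
  induction k with
  | zero => simp [trunc]
  | succ k ih => rw [trunc, pow_succ]; split_ifs <;> omega

theorem trunc_add (A : Set ℕ) (k j : ℕ) :
    2 ^ j * trunc A k ≤ trunc A (k + j) ∧ trunc A (k + j) + 1 ≤ 2 ^ j * (trunc A k + 1) := by
  induction j with
  | zero => simp
  | succ j ih => rw [← add_assoc, trunc, pow_succ]; split_ifs <;> constructor <;> nlinarith [ih.1, ih.2]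

theorem trunc_add_eq (A : Set ℕ) (k j : ℕ) (h : ∀ i, k ≤ i → i < k + j → i ∉ A) :
    trunc A (k + j) = 2 ^ j * trunc A k := by
  induction j with
  | zero => simp
  | succ j ih =>
    rw [← add_assoc, trunc, ih (fun i h1 h2 => h i h1 (by omega)),
      if_neg (h _ (by omega) (by omega))]
    ring

theorem summ (A : Set ℕ) : Summable (Set.indicator A (fun n => (2 : ℝ)⁻¹ ^ (n + 1))) := by
  apply Summable.indicator
  have := (summable_geometric_of_lt_one (r := (2 : ℝ)⁻¹) (by norm_num) (by norm_num))
  exact (summable_nat_add_iff 1).2 this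

theorem ind_nonneg (A : Set ℕ) (n : ℕ) :
    0 ≤ Set.indicator A (fun n => (2 : ℝ)⁻¹ ^ (n + 1)) n :=
  Set.indicator_nonneg (fun _ _ => by positivity) n

theorem trunc_le (A : Set ℕ) (k : ℕ) : (trunc A k : ℝ) / 2 ^ k ≤ binReal A := by
  rw [← trunc_sum]
  exact (summ A).sum_le_tsum _ (fun i _ => ind_nonneg A i)

theorem le_trunc (A : Set ℕ) (k : ℕ) : binReal A ≤ ((trunc A k : ℝ) + 1) / 2 ^ k := by
  have h : ∀ j, ∑ n ∈ Finset.range j, Set.indicator A (fun n => (2 : ℝ)⁻¹ ^ (n + 1)) n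
      ≤ ((trunc A k : ℝ) + 1) / 2 ^ k := by
    intro j
    refine le_trans (Finset.sum_le_sum_of_subset_of_nonneg (t := Finset.range (k + j)) ?_
      (fun i _ _ => ind_nonneg A i)) ?_
    · intro i; simp; omega
    · rw [trunc_sum, pow_add, div_le_div_iff₀ (by positivity) (by positivity)]
      have : ((trunc A (k + j) + 1 : ℕ) : ℝ) ≤ ((2 ^ j * (trunc A k + 1) : ℕ) : ℝ) := by
        exact_mod_cast (trunc_add A k j).2
      push_cast at this
      have h2 : (0 : ℝ) < 2 ^ k := by positivity
      nlinarith
  exact Real.tsum_le_of_sum_range_le (ind_nonneg A) h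

theorem pow_computable : Primrec (fun n : ℕ => 2 ^ n) := by
  have : Primrec fun n : ℕ => (n.rec (motive := fun _ => ℕ) 1 fun _ IH => 2 * IH : ℕ) :=
    Primrec.nat_rec₁ 1 (Primrec.nat_mul.comp (Primrec.const 2) Primrec.snd)
  refine this.of_eq fun n => ?_
  induction n with
  | zero => rfl
  | succ n ih => simp only [ih]; ring

/-- computable lower bound on the distance to `α` -/
theorem exists_h (A : Set ℕ) (hA : ComputablePred (· ∈ A)) :
    ∃ h : ℕ × ℕ → ℕ, Computable h ∧ ∀ a d : ℕ, 0 < d → (a : ℝ) / d < binReal A →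
      1 / 2 ^ h (a, d) ≤ binReal A - (a : ℝ) / d := by
  by_cases hr : ∃ r : ℚ, (r : ℝ) = binReal A
  · obtain ⟨r, hr⟩ := hr
    refine ⟨fun p => p.2 * r.den, ?_, fun a d hd hlt => ?_⟩
    · exact Primrec.nat_mul.to_comp.comp Computable.snd (Computable.const _)
    · rw [← hr] at hlt ⊢
      have hq : (a / d : ℚ) < r := by
        rw [← Rat.cast_lt (K := ℝ)]; push_cast; exact hlt
      have hd' : (0 : ℚ) < d := by exact_mod_cast hd
      have hrd : (0 : ℚ) < r.den := by exact_mod_cast r.den_pos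
      have key : (1 / 2 ^ (d * r.den) : ℚ) ≤ r - a / d := by
        have e : r - a / d = ((r.num * d - a * r.den : ℤ) : ℚ) / (d * r.den) := by
          conv_lhs => rw [← Rat.num_div_den r]
          push_cast
          field_simp
        have hpos : 0 < r - a / d := by linarith
        rw [e] at hpos ⊢
        have h1 : (0 : ℚ) < ((r.num * d - a * r.den : ℤ) : ℚ) := by
          by_contra hcon
          have := div_nonpos_of_nonpos_of_nonneg (not_lt.1 hcon) (by positivity : (0:ℚ) ≤ d * r.den)
          linarith
        have h2 : (1 : ℚ) ≤ ((r.num * d - a * r.den : ℤ) : ℚ) := by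
          have : 0 < (r.num * d - a * r.den : ℤ) := by exact_mod_cast h1
          exact_mod_cast this
        have h3 : ((d * r.den : ℕ) : ℚ) ≤ 2 ^ (d * r.den) := by
          exact_mod_cast (Nat.lt_two_pow_self (n := d * r.den)).le
        push_cast at h3
        rw [div_le_div_iff₀ (by positivity) (by positivity), one_mul]
        exact h3.trans (le_mul_of_one_le_left (by positivity) h2)
      have := (Rat.cast_le (K := ℝ)).2 key
      push_cast at this
      exact this
  · have hT := trunc_computable A hA
    have hC : Computable₂ (fun (p : ℕ × ℕ) (k : ℕ) => decide
        (p.2 = 0 ∨ p.1 * 2 ^ k + p.2 ≤ trunc A k * p.2 ∨ (trunc A k + 1) * p.2 ≤ p.1 * 2 ^ k)) := by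
      have hR : PrimrecPred (fun x : (ℕ × ℕ) × ℕ × ℕ => (x.1.2 = 0 ∨
          x.1.1 * 2 ^ x.2.1 + x.1.2 ≤ x.2.2 * x.1.2 ∨ (x.2.2 + 1) * x.1.2 ≤ x.1.1 * 2 ^ x.2.1)) := by
        have p1 : Primrec fun x : (ℕ × ℕ) × ℕ × ℕ => x.1.1 := Primrec.fst.comp Primrec.fst
        have p2 : Primrec fun x : (ℕ × ℕ) × ℕ × ℕ => x.1.2 := Primrec.snd.comp Primrec.fst
        have p3 : Primrec fun x : (ℕ × ℕ) × ℕ × ℕ => x.2.1 := Primrec.fst.comp Primrec.snd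
        have p4 : Primrec fun x : (ℕ × ℕ) × ℕ × ℕ => x.2.2 := Primrec.snd.comp Primrec.snd
        have p5 := Primrec.nat_mul.comp p1 (pow_computable.comp p3)
        exact (Primrec.eq.comp p2 (Primrec.const 0)).or
          ((Primrec.nat_le.comp (Primrec.nat_add.comp p5 p2) (Primrec.nat_mul.comp p4 p2)).or
          (Primrec.nat_le.comp (Primrec.nat_mul.comp (Primrec.succ.comp p4) p2) p5))
      have hp : Computable (fun x : (ℕ × ℕ) × ℕ => (x.1, (x.2, trunc A x.2))) :=
        Computable.pair Computable.fst
          (Computable.pair Computable.snd (hT.comp Computable.snd))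
      have hd := hR.decide.to_comp.comp hp
      refine Computable₂.mk (hd.of_eq fun x => ?_)
      dsimp only
    obtain ⟨F, hF, hF2⟩ := aux_search _ hC (by
      rintro ⟨a, d⟩
      simp only [decide_eq_true_eq]
      rcases Nat.eq_zero_or_pos d with hd | hd
      · exact ⟨0, Or.inl hd⟩
      have hd' : (0 : ℝ) < d := by exact_mod_cast hd
      have hne : binReal A - (a : ℝ) / d ≠ 0 := by
        intro h0
        exact hr ⟨a / d, by push_cast; linarith⟩
      obtain ⟨k, hk⟩ := exists_pow_lt_of_lt_one (half_pos (abs_pos.2 hne))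
        (by norm_num : (1 / 2 : ℝ) < 1)
      have h2 : (0 : ℝ) < 2 ^ k := by positivity
      have hk' : 2 * (1 / 2 ^ k) < |binReal A - (a : ℝ) / d| := by
        rw [one_div_pow] at hk; linarith
      have t1 := trunc_le A k
      have t2 := le_trunc A k
      rw [add_div] at t2
      refine ⟨k, Or.inr ?_⟩
      rcases lt_or_gt_of_ne hne with h | h
      · right
        rw [abs_of_neg h] at hk'
        have : ((trunc A k : ℝ) + 1) / 2 ^ k ≤ a / d := by
          rw [add_div]
          have : (0:ℝ) < 1 / 2 ^ k := by positivity
          linarith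
        rw [div_le_div_iff₀ h2 hd'] at this
        exact_mod_cast this
      · left
        rw [abs_of_pos h] at hk'
        have : (a : ℝ) / d + 1 / 2 ^ k ≤ (trunc A k : ℝ) / 2 ^ k := by
          linarith
        rw [div_add_div _ _ hd'.ne' h2.ne', div_le_div_iff₀ (by positivity) h2] at this
        have : (a : ℝ) * 2 ^ k + d ≤ trunc A k * d := by
          have h3 : ((a : ℝ) * 2 ^ k + d) * 2 ^ k ≤ (trunc A k * d) * 2 ^ k := by linarith
          exact le_of_mul_le_mul_right h3 h2
        exact_mod_cast this)
    refine ⟨F, hF, fun a d hd hlt => ?_⟩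
    have h := hF2 (a, d)
    simp only [decide_eq_true_eq] at h
    generalize F (a, d) = k at h ⊢
    have hd' : (0 : ℝ) < d := by exact_mod_cast hd
    have h2 : (0 : ℝ) < 2 ^ k := by positivity
    have t1 := trunc_le A k
    have t2 := le_trunc A k
    rcases h with h | h | h
    · omega
    · have h' : (a : ℝ) * 2 ^ k + d ≤ trunc A k * d := by exact_mod_cast h
      have : (a : ℝ) / d + 1 / 2 ^ k ≤ (trunc A k : ℝ) / 2 ^ k := by
        rw [div_add_div _ _ hd'.ne' h2.ne', div_le_div_iff₀ (by positivity) h2]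
        nlinarith
      linarith
    · have h' : ((trunc A k : ℝ) + 1) * d ≤ a * 2 ^ k := by exact_mod_cast h
      have := (div_le_div_iff₀ h2 hd').2 h'
      linarith

theorem exists_Q : ∃ Q : ℕ × ℕ → ℚ, Computable Q ∧ ∀ i m, 0 < i → Q (i, m) = (i : ℚ) / 2 ^ m := by
  have hofNat : Computable (Denumerable.ofNat ℚ) := Computable.ofNat ℚ
  have hC : Computable₂ (fun (p : ℕ × ℕ) (e : ℕ) => decide
      ((Denumerable.ofNat ℚ e).num.toNat * 2 ^ p.2 = p.1 * (Denumerable.ofNat ℚ e).den)) := by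
    have hR : PrimrecRel (fun x y : ℕ => x = y) := Primrec.eq
    refine hR.decide.to_comp.comp (Primrec.nat_mul.to_comp.comp
      (computable_num.comp (hofNat.comp (Computable.snd (α := ℕ × ℕ))))
      (pow_computable.to_comp.comp (Computable.snd.comp Computable.fst)))
      (Primrec.nat_mul.to_comp.comp (Computable.fst.comp Computable.fst)
      (computable_den.comp (hofNat.comp Computable.snd)))
  have key : ∀ (q : ℚ) (i m : ℕ), 0 < i →
      (q.num.toNat * 2 ^ m = i * q.den ↔ q = (i : ℚ) / 2 ^ m) := by
    intro q i m hi
    have hd : (0 : ℚ) < q.den := by exact_mod_cast q.den_pos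
    constructor
    · intro h
      have h0 : 0 < q.num.toNat := by
        rcases Nat.eq_zero_or_pos q.num.toNat with h0 | h0
        · rw [h0] at h
          have := Nat.mul_pos hi q.den_pos
          omega
        · exact h0
      have h1 : (q.num.toNat : ℤ) = q.num := Int.toNat_of_nonneg (by omega)
      have h3 : (q.num : ℚ) * 2 ^ m = i * q.den := by
        rw [← h1]; exact_mod_cast h
      rw [← Rat.num_div_den q, div_eq_div_iff hd.ne' (by positivity)]
      simpa using h3
    · intro h
      have hq : 0 < q := by rw [h]; positivity
      have h1 : (q.num.toNat : ℤ) = q.num := Int.toNat_of_nonneg (Rat.num_pos.2 hq).le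
      rw [← Rat.num_div_den q, div_eq_div_iff hd.ne' (by positivity), ← h1] at h
      exact_mod_cast h
  have hx : ∀ p : ℕ × ℕ, ∃ e : ℕ, decide
      ((Denumerable.ofNat ℚ e).num.toNat * 2 ^ p.2 = p.1 * (Denumerable.ofNat ℚ e).den) = true := by
    rintro ⟨i, m⟩
    refine ⟨@Encodable.encode ℚ Primcodable.toEncodable ((i : ℚ) / 2 ^ m), ?_⟩
    have : Denumerable.ofNat ℚ (@Encodable.encode ℚ Primcodable.toEncodable ((i : ℚ) / 2 ^ m))
      = (i : ℚ) / 2 ^ m := Denumerable.ofNat_encode _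
    simp only [this, decide_eq_true_eq]
    rcases Nat.eq_zero_or_pos i with rfl | hi
    · simp
    · exact (key _ i m hi).2 rfl
  obtain ⟨F, hF, hF2⟩ := aux_search _ hC hx
  refine ⟨fun p => Denumerable.ofNat ℚ (F p), hofNat.comp hF, fun i m hi => ?_⟩
  have := hF2 (i, m)
  simp only [decide_eq_true_eq] at this
  exact (key _ i m hi).1 this

theorem trunc_lt_binReal (A : Set ℕ) (hA : A.Infinite) (k : ℕ) :
    (trunc A k : ℝ) / 2 ^ k < binReal A := by
  obtain ⟨n, hn, hkn⟩ := hA.exists_gt k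
  obtain ⟨j, rfl⟩ := Nat.exists_eq_add_of_le hkn.le
  refine lt_of_lt_of_le ?_ (trunc_le A (k + j + 1))
  have h1 := (trunc_add A k j).1
  have h2 : trunc A (k + j + 1) = 2 * trunc A (k + j) + 1 := by rw [trunc, if_pos hn]
  rw [div_lt_div_iff₀ (by positivity) (by positivity)]
  have h3 : trunc A k * 2 ^ (k + j + 1) < trunc A (k + j + 1) * 2 ^ k := by
    rw [h2, pow_succ, pow_add]
    have : 0 < 2 ^ k := by positivity
    nlinarith
  exact_mod_cast h3

theorem rec_max_ge (w : ℕ → ℕ) (L j : ℕ) (h : j < L) :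
    w j ≤ (L.rec (motive := fun _ => ℕ) 0 fun j acc => max acc (w j) : ℕ) := by
  induction L with
  | zero => omega
  | succ L ih =>
    rcases Nat.lt_succ_iff_lt_or_eq.1 h with h | rfl
    · exact (ih h).trans (le_max_left _ _)
    · exact le_max_right _ _

theorem not_hyperimmune_of_totalSolovay (A B : Set ℕ)
    (hAcomp : ComputablePred (· ∈ A)) (hA : A.Infinite) (hB : B.Infinite)
    (h : TotalSolovayReducible (binReal A) (binReal B)) :
    ¬ Hyperimmune B := by
  obtain ⟨c, hc, f, hf, H⟩ := h
  obtain ⟨η, hη, hη2⟩ := exists_h A hAcomp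
  obtain ⟨Q, hQ, hQ2⟩ := exists_Q
  obtain ⟨c', hc'⟩ : ∃ c' : ℕ, (c : ℝ) < 2 ^ c' := pow_unbounded_of_one_lt _ (by norm_num)
  have hw : ∃ w : ℕ → ℕ, Computable w ∧
      ∀ j, w j = c' + η ((f (Q j.unpair)).num.toNat, (f (Q j.unpair)).den) := by
    refine ⟨_, ?_, fun j => rfl⟩
    have h1 : Computable fun j : ℕ => f (Q j.unpair) := hf.comp (hQ.comp Computable.unpair)
    exact Primrec.nat_add.to_comp.comp (Computable.const c')
      (hη.comp (Computable.pair (computable_num.comp h1) (computable_den.comp h1)))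
  obtain ⟨w, hw, hw2⟩ := hw
  obtain ⟨W, hW, hW2⟩ : ∃ W : ℕ → ℕ, Computable W ∧ ∀ L j, j < L → w j ≤ W L := by
    refine ⟨_, ?_, fun L j h => rec_max_ge w L j h⟩
    refine Computable.nat_rec (f := fun n : ℕ => n) (g := fun _ => 0)
      (h := fun _ (p : ℕ × ℕ) => max p.2 (w p.1)) Computable.id (Computable.const 0) ?_
    show Computable (fun x : ℕ × (ℕ × ℕ) => max x.2.2 (w x.2.1))
    exact Primrec.nat_max.to_comp.comp (Computable.snd.comp Computable.snd)
      (hw.comp (Computable.fst.comp Computable.snd))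
  obtain ⟨g, hg, hg0, hg1⟩ : ∃ g : ℕ → ℕ, Computable g ∧ g 0 = Nat.nth (· ∈ B) 0 ∧
      ∀ n, g (n + 1) = W ((2 ^ (g n + 1) + 1) * (2 ^ (g n + 1) + 1)) := by
    refine ⟨fun n => n.rec (motive := fun _ => ℕ) (Nat.nth (· ∈ B) 0)
      (fun _ y => W ((2 ^ (y + 1) + 1) * (2 ^ (y + 1) + 1))), ?_, rfl, fun n => rfl⟩
    refine Computable.nat_rec (f := fun n : ℕ => n) (g := fun _ => Nat.nth (· ∈ B) 0)
      (h := fun _ (p : ℕ × ℕ) => W ((2 ^ (p.2 + 1) + 1) * (2 ^ (p.2 + 1) + 1)))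
      Computable.id (Computable.const _) ?_
    have h1 : Primrec (fun y : ℕ => 2 ^ (y + 1) + 1) :=
      Primrec.succ.comp (pow_computable.comp Primrec.succ)
    have h2 : Primrec (fun y : ℕ => (2 ^ (y + 1) + 1) * (2 ^ (y + 1) + 1)) :=
      Primrec.nat_mul.comp h1 h1
    have h3 : Computable (fun x : ℕ × (ℕ × ℕ) => x.2.2) :=
      Computable.snd.comp Computable.snd
    exact hW.comp (h2.to_comp.comp h3)
  intro hyp
  refine hyp ⟨g, hg, fun n => ?_⟩
  induction n with
  | zero => exact hg0.ge
  | succ n ih =>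
    have hinf : ({x | x ∈ B} : Set ℕ).Infinite := hB
    obtain ⟨m, hm⟩ : ∃ m, m = Nat.nth (· ∈ B) n + 1 := ⟨_, rfl⟩
    obtain ⟨p, hp⟩ : ∃ p, p = Nat.nth (· ∈ B) (n + 1) := ⟨_, rfl⟩
    have hmp : m ≤ p := by
      rw [hm, hp]; exact Nat.nth_strictMono hinf (Nat.lt_succ_self n)
    have hgap : ∀ i, m ≤ i → i < p → i ∉ B := by
      intro i h1 h2 hi
      have := Nat.le_nth_of_lt_nth_succ (p := (· ∈ B)) (k := n) (a := i) (by rw [← hp]; exact h2) hi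
      omega
    obtain ⟨j, rfl⟩ := Nat.exists_eq_add_of_le hmp
    have heq := trunc_add_eq B m j hgap
    have hi0 : 0 < trunc B m := by
      rw [hm, trunc, if_pos (Nat.nth_mem_of_infinite hinf n)]; omega
    obtain ⟨q, hq⟩ : ∃ q, q = Q (trunc B m, m) := ⟨_, rfl⟩
    have hqe := hQ2 (trunc B m) m hi0
    rw [← hq] at hqe
    have hqr : (q : ℝ) = (trunc B m : ℝ) / 2 ^ m := by rw [hqe]; push_cast; rfl
    obtain ⟨H1, H2⟩ := H q (by rw [hqr]; exact trunc_lt_binReal B hB m)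
    have hdist : binReal B - q ≤ 1 / 2 ^ (m + j) := by
      have := le_trunc B (m + j)
      rw [heq] at this
      have e : (((2 ^ j * trunc B m : ℕ) : ℝ) + 1) / 2 ^ (m + j) = q + 1 / 2 ^ (m + j) := by
        rw [hqr]; push_cast; rw [pow_add]; field_simp
      linarith
    have hfd : (0 : ℝ) < (f q).den := by exact_mod_cast (f q).den_pos
    have hfe : ((f q : ℚ) : ℝ) = ((f q).num : ℝ) / (f q).den := Rat.cast_def _
    have hα : 0 < binReal A := by simpa [trunc] using trunc_lt_binReal A hA 0
    have hcases : (((f q).num.toNat : ℕ) : ℝ) / (f q).den < binReal A ∧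
        ((f q : ℚ) : ℝ) ≤ (((f q).num.toNat : ℕ) : ℝ) / (f q).den := by
      rcases le_total 0 (f q).num with h0 | h0
      · have h1 : (((f q).num.toNat : ℕ) : ℝ) = ((f q).num : ℝ) := by
          exact_mod_cast Int.toNat_of_nonneg h0
        rw [h1, ← hfe]
        exact ⟨H1, le_rfl⟩
      · rw [Int.toNat_of_nonpos h0]
        refine ⟨by simpa using hα, ?_⟩
        have : ((f q : ℚ) : ℝ) ≤ 0 := by exact_mod_cast Rat.num_nonpos.1 h0
        simpa using this
    have h5 := hη2 _ _ (f q).den_pos hcases.1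
    have hwj := hw2 (Nat.pair (trunc B m) m)
    rw [Nat.unpair_pair, ← hq] at hwj
    have hpw : m + j ≤ w (Nat.pair (trunc B m) m) := by
      rw [hwj]
      generalize η ((f q).num.toNat, (f q).den) = k at h5
      have hc0 : (0 : ℝ) < c := by exact_mod_cast hc
      have h6 : (1 : ℝ) / 2 ^ k < c * (1 / 2 ^ (m + j)) := by
        have := mul_le_mul_of_nonneg_left hdist hc0.le
        linarith [hcases.2]
      have h7 : (2 : ℝ) ^ (m + j) < 2 ^ (c' + k) := by
        rw [mul_one_div, div_lt_div_iff₀ (by positivity) (by positivity), one_mul] at h6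
        rw [pow_add 2 c' k]
        exact h6.trans (mul_lt_mul_of_pos_right hc' (by positivity))
      exact ((pow_lt_pow_iff_right₀ (by norm_num : (1 : ℝ) < 2)).1 h7).le
    rw [← hp, hg1]
    refine hpw.trans (hW2 _ _ ?_)
    have hmg : m ≤ g n + 1 := by omega
    have h8 : max (trunc B m) m ≤ 2 ^ (g n + 1) := by
      have h9 : 2 ^ m ≤ 2 ^ (g n + 1) := Nat.pow_le_pow_right (by norm_num) hmg
      exact max_le ((trunc_lt B m).le.trans h9) ((Nat.lt_two_pow_self).le.trans h9)
    refine (Nat.pair_lt_max_add_one_sq _ _).trans_le ?_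
    rw [sq]
    exact Nat.mul_le_mul (by omega) (by omega)
end

section
/- There is no least element among the left-c.e. reals with respect to total Solovay reducibility; that is, there is no left-c.e. real γ such that γ is total-Solovay reducible to every left-c.e. real. -/
/-- A real is left-c.e. if some computable nondecreasing sequence of rationals converges to it. -/
def LeftCE (α : ℝ) : Prop :=
  ∃ a : ℕ → ℚ, Computable a ∧ Monotone a ∧
    Filter.Tendsto (fun n => (a n : ℝ)) Filter.atTop (nhds α)

open Encodable
theorem encRat (x : ℚ) : @encode ℚ Rat.instEncodable x = Nat.pair (Equiv.intEquivNat x.num) x.den := by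
  rfl
theorem intAbs (z : ℤ) : z.natAbs = (Equiv.intEquivNat z + 1)/2 := by
  cases z with
  | ofNat n => show n = (2*n+1)/2; omega
  | negSucc n => show n+1 = (2*n+1+1)/2; omega
noncomputable def uu (n : ℕ) : ℕ := @encode ℚ Rat.instEncodable (Denumerable.ofNat ℚ n)

theorem memS (k : ℕ) : (∃ x, @encode ℚ Rat.instEncodable x = k) ↔ 0 < k.unpair.2 ∧ Nat.Coprime ((k.unpair.1+1)/2) k.unpair.2 := by
  constructor
  · rintro ⟨x, rfl⟩
    rw [encRat, Nat.unpair_pair]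
    exact ⟨x.den_pos, by rw [← intAbs]; exact x.reduced⟩
  · rintro ⟨h1, h2⟩
    refine ⟨⟨Equiv.intEquivNat.symm k.unpair.1, k.unpair.2, h1.ne', ?_⟩, ?_⟩
    · rw [intAbs]; simpa using h2
    · rw [encRat]; simp

theorem uu_inf (v : ℕ) : ∃ m, v < m ∧ ∃ x, @encode ℚ Rat.instEncodable x = m := by
  by_contra h
  push Not at h
  have : (Set.range (@encode ℚ Rat.instEncodable)).Finite := by
    refine (Set.finite_Iic v).subset ?_
    rintro _ ⟨x, rfl⟩
    by_contra h'
    exact h _ (by simpa using h') x rfl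
  exact Set.infinite_range_of_injective (@encode_injective ℚ Rat.instEncodable) this

theorem uu_succ (n : ℕ) : uu n < uu (n+1) ∧ ∀ x : ℚ, uu n < @encode ℚ Rat.instEncodable x → uu (n+1) ≤ @encode ℚ Rat.instEncodable x := by
  let := @decidableRangeEncode ℚ Rat.instEncodable
  let : Infinite (Set.range (@encode ℚ Rat.instEncodable)) :=
    Infinite.of_injective _ (Equiv.ofInjective _ (@encode_injective ℚ Rat.instEncodable)).injective
  have key : ∀ n, uu n = (Nat.Subtype.ofNat (Set.range (@encode ℚ Rat.instEncodable)) n : ℕ) := by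
    intro n
    unfold uu
    have : Denumerable.ofNat ℚ n = (@equivRangeEncode ℚ Rat.instEncodable).symm (Nat.Subtype.ofNat (Set.range (@encode ℚ Rat.instEncodable)) n) := by
      unfold Rat.instDenumerable Denumerable.ofEncodableOfInfinite
      rw [Denumerable.ofEquiv_ofNat]
      rfl
    rw [this]
    have h2 := (@equivRangeEncode ℚ Rat.instEncodable).apply_symm_apply (Nat.Subtype.ofNat (Set.range (@encode ℚ Rat.instEncodable)) n)
    exact congrArg Subtype.val h2
  rw [key, key]
  refine ⟨Nat.Subtype.lt_succ_self _, fun x hx => ?_⟩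
  exact Nat.Subtype.succ_le_of_lt (s := Set.range (@encode ℚ Rat.instEncodable)) (x := ⟨@encode ℚ Rat.instEncodable x, ⟨x, rfl⟩⟩) hx

theorem comp_find {α : Type*} [Primcodable α] (p : α → ℕ → Prop) [∀ a n, Decidable (p a n)] (hp : Computable₂ (fun a n => decide (p a n)))
    (h : ∀ a, ∃ n, p a n) : Computable (fun a => Nat.find (h a)) := by
  have := Partrec.rfind (p := fun a n => Part.some (decide (p a n))) hp.partrec₂
  refine this.of_eq fun a => ?_
  refine Part.eq_some_iff.2 (Nat.mem_rfind.2 ?_)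
  refine ⟨by simpa using Nat.find_spec (h a), fun {m} hm => by simpa using Nat.find_min (h a) hm⟩

theorem prim_coprime : PrimrecPred (fun k : ℕ => 0 < k.unpair.2 ∧ Nat.Coprime ((k.unpair.1+1)/2) k.unpair.2) := by
  have hu : Primrec (fun k : ℕ => k.unpair.2) := Primrec.snd.comp Primrec.unpair
  have hv : Primrec (fun k : ℕ => (k.unpair.1+1)/2) :=
    Primrec.nat_div.comp (Primrec.succ.comp (Primrec.fst.comp Primrec.unpair)) (Primrec.const 2)
  have h1 : PrimrecRel (fun (x : ℕ) (k : ℕ) => ¬ (((k.unpair.1+1)/2) % x = 0) ∨ ¬ (k.unpair.2 % x = 0) ∨ x = 1) := by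
    refine PrimrecPred.or (PrimrecPred.not ?_) (PrimrecPred.or (PrimrecPred.not ?_) ?_)
    · exact Primrec.eq.comp (Primrec.nat_mod.comp (hv.comp Primrec.snd) Primrec.fst) (Primrec.const 0)
    · exact Primrec.eq.comp (Primrec.nat_mod.comp (hu.comp Primrec.snd) Primrec.fst) (Primrec.const 0)
    · exact Primrec.eq.comp Primrec.fst (Primrec.const 1)
  have h2 := h1.forall_lt
  have h3 : PrimrecPred (fun k : ℕ => ∀ x < k.unpair.2 + 1, ¬ (((k.unpair.1+1)/2) % x = 0) ∨ ¬ (k.unpair.2 % x = 0) ∨ x = 1) :=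
    h2.comp (Primrec.succ.comp hu) Primrec.id
  have h4 : PrimrecPred (fun k : ℕ => 0 < k.unpair.2) := Primrec.nat_lt.comp (Primrec.const 0) hu
  refine (h4.and h3).of_eq fun k => ?_
  refine and_congr_right fun hk => ?_
  constructor
  · intro h
    have hg : Nat.gcd ((k.unpair.1+1)/2) k.unpair.2 ≤ k.unpair.2 := Nat.gcd_le_right _ hk
    rcases h _ (Nat.lt_succ_of_le hg) with h | h | h
    · exact absurd (Nat.mod_eq_zero_of_dvd (Nat.gcd_dvd_left _ _)) h
    · exact absurd (Nat.mod_eq_zero_of_dvd (Nat.gcd_dvd_right _ _)) h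
    · exact h
  · intro h x hx
    by_contra hc
    push Not at hc
    exact hc.2.2 (Nat.eq_one_of_dvd_coprimes h (Nat.dvd_of_mod_eq_zero hc.1) (Nat.dvd_of_mod_eq_zero hc.2.1))

theorem comp_uu : Computable uu := by
  classical
  let P : ℕ → ℕ → Prop := fun v m => v < m ∧ (0 < m.unpair.2 ∧ Nat.Coprime ((m.unpair.1+1)/2) m.unpair.2)
  have hP : ∀ v, ∃ m, P v m := by
    intro v
    obtain ⟨m, h1, h2⟩ := uu_inf v
    exact ⟨m, h1, (memS m).1 h2⟩
  have hd : Computable₂ (fun v m => decide (P v m)) := by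
    have : PrimrecPred (fun x : ℕ × ℕ => P x.1 x.2) :=
      (Primrec.nat_lt.comp Primrec.fst Primrec.snd).and (prim_coprime.comp Primrec.snd)
    exact this.decide.to_comp
  have hf := comp_find P hd hP
  have hr : Computable (fun n : ℕ => Nat.rec (motive := fun _ => ℕ) (uu 0) (fun _ v => Nat.find (hP v)) n) :=
    Computable.nat_rec Computable.id (Computable.const _) (hf.comp (Computable.snd.comp Computable.snd)).to₂
  refine hr.of_eq fun n => ?_
  induction n with
  | zero => rfl
  | succ n ih =>
    simp only [] at ih ⊢
    rw [ih]
    obtain ⟨h1, h2⟩ := uu_succ n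
    rw [Nat.find_eq_iff]
    refine ⟨⟨h1, (memS _).1 ⟨_, rfl⟩⟩, fun m hm hPm => ?_⟩
    obtain ⟨x, rfl⟩ := (memS m).2 hPm.2
    exact absurd (h2 x hPm.1) (by omega)

/-- code of a rational in the enumeration -/
def dEnc (x : ℚ) : ℕ := @encode ℚ Primcodable.toEncodable x

theorem comp_dEnc : Computable dEnc := Computable.encode

theorem ofNat_dEnc (x : ℚ) : Denumerable.ofNat ℚ (dEnc x) = x := Denumerable.ofNat_encode x

theorem uu_encode (x : ℚ) : uu (dEnc x) = Nat.pair (Equiv.intEquivNat x.num) x.den := by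
  unfold uu
  rw [ofNat_dEnc, encRat]

theorem comp_den : Computable (fun x : ℚ => x.den) := by
  have : Computable (fun x : ℚ => (uu (dEnc x)).unpair.2) :=
    Computable.snd.comp (Computable.unpair.comp (comp_uu.comp comp_dEnc))
  refine this.of_eq fun x => ?_
  rw [uu_encode, Nat.unpair_pair]

theorem comp_numcode : Computable (fun x : ℚ => Equiv.intEquivNat x.num) := by
  have : Computable (fun x : ℚ => (uu (dEnc x)).unpair.1) :=
    Computable.fst.comp (Computable.unpair.comp (comp_uu.comp comp_dEnc))
  refine this.of_eq fun x => ?_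
  rw [uu_encode, Nat.unpair_pair]

theorem int_pos (z : ℤ) : z.toNat = if Equiv.intEquivNat z % 2 = 0 then Equiv.intEquivNat z / 2 else 0 := by
  cases z with
  | ofNat n => show n = if (2*n) % 2 = 0 then (2*n)/2 else 0; simp
  | negSucc n => show 0 = if (2*n+1) % 2 = 0 then (2*n+1)/2 else 0; simp [Nat.add_mod]

theorem int_neg (z : ℤ) : (-z).toNat = (Equiv.intEquivNat z + 1) / 2 - z.toNat := by
  rw [← intAbs]; omega

theorem comp_pos : Computable (fun x : ℚ => x.num.toNat) := by
  have h : Primrec (fun k : ℕ => if k % 2 = 0 then k / 2 else 0) :=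
    Primrec.ite (Primrec.eq.comp (Primrec.nat_mod.comp Primrec.id (Primrec.const 2)) (Primrec.const 0))
      (Primrec.nat_div.comp Primrec.id (Primrec.const 2)) (Primrec.const 0)
  exact (h.to_comp.comp comp_numcode).of_eq fun x => (int_pos _).symm

theorem comp_neg : Computable (fun x : ℚ => (-x.num).toNat) := by
  have h : Primrec (fun k : ℕ => (k + 1) / 2) := Primrec.nat_div.comp Primrec.succ (Primrec.const 2)
  exact (Primrec.nat_sub.to_comp.comp (h.to_comp.comp comp_numcode) comp_pos).of_eq fun x => (int_neg _).symm

theorem prim_pow : Primrec (fun k : ℕ => 2 ^ k) := by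
  have : Primrec (fun k : ℕ => Nat.rec (motive := fun _ => ℕ) 1 (fun _ v => 2 * v) k) :=
    Primrec.nat_rec₁ 1 (Primrec.nat_mul.comp (Primrec.const 2) Primrec.snd).to₂
  refine this.of_eq fun k => ?_
  induction k with
  | zero => rfl
  | succ n ih => simp only [] at ih ⊢; rw [ih, pow_succ, mul_comm]

/-- dyadics -/
def dy (p : ℕ × ℕ) : ℚ := (p.1 : ℚ) / 2 ^ p.2

theorem comp_dy : Computable dy := by
  let P : ℕ × ℕ → ℕ → Prop := fun p n =>
    (Denumerable.ofNat ℚ n).num.toNat * 2 ^ p.2 = p.1 * (Denumerable.ofNat ℚ n).den ∧ (-(Denumerable.ofNat ℚ n).num).toNat = 0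
  have key : ∀ p n, P p n ↔ Denumerable.ofNat ℚ n = dy p := by
    intro p n
    simp only [P]
    generalize Denumerable.ofNat ℚ n = x
    have hx : (0:ℚ) < x.den := by exact_mod_cast x.den_pos
    unfold dy
    rw [eq_div_iff (by positivity)]
    constructor
    · rintro ⟨h1, h2⟩
      have h3 : (x.num.toNat : ℤ) = x.num := by omega
      have h4 : (x.num : ℚ) * 2 ^ p.2 = p.1 * x.den := by
        rw [← h3]; exact_mod_cast h1
      have h5 := Rat.num_div_den x
      rw [← h5, div_mul_eq_mul_div, h4]
      field_simp
    · intro h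
      have h0 : 0 ≤ x := by
        by_contra hc
        have : x * 2 ^ p.2 < 0 := mul_neg_of_neg_of_pos (not_le.1 hc) (by positivity)
        have : (0:ℚ) ≤ p.1 := by positivity
        linarith
      have hn := Rat.num_nonneg.2 h0
      refine ⟨?_, by omega⟩
      have h3 : (x.num.toNat : ℤ) = x.num := by omega
      have h4 : (x.num : ℚ) * 2 ^ p.2 = p.1 * x.den := by
        rw [← h, ← Rat.mul_den_eq_num x]; ring
      rw [← h3] at h4
      exact_mod_cast h4
  have hex : ∀ p, ∃ n, P p n := fun p => ⟨dEnc (dy p), (key _ _).2 (ofNat_dEnc _)⟩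
  have ho : Computable (fun x : (ℕ × ℕ) × ℕ => Denumerable.ofNat ℚ x.2) := (Computable.ofNat ℚ).comp Computable.snd
  have hd : Computable₂ (fun p n => decide (P p n)) := by
    have e1 : Computable (fun x : (ℕ × ℕ) × ℕ => (Denumerable.ofNat ℚ x.2).num.toNat * 2 ^ x.1.2) :=
      Primrec.nat_mul.to_comp.comp (comp_pos.comp ho) (prim_pow.to_comp.comp (Computable.snd.comp Computable.fst))
    have e2 : Computable (fun x : (ℕ × ℕ) × ℕ => x.1.1 * (Denumerable.ofNat ℚ x.2).den) :=
      Primrec.nat_mul.to_comp.comp (Computable.fst.comp Computable.fst) (comp_den.comp ho)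
    have e3 := comp_neg.comp ho
    have b1 := (Primrec.beq (α := ℕ)).to_comp.comp e1 e2
    have b2 := (Primrec.beq (α := ℕ)).to_comp.comp e3 (Computable.const 0)
    refine (Primrec.and.to_comp.comp b1 b2).of_eq fun x => ?_
    rw [Bool.eq_iff_iff, decide_eq_true_iff, Bool.and_eq_true, beq_iff_eq, beq_iff_eq]
  have hf := comp_find P hd hex
  refine ((Computable.ofNat ℚ).comp hf).of_eq fun p => ?_
  exact (key _ _).1 (Nat.find_spec (hex p))

open Nat.Partrec (Code) in
/-- one step of the construction -/
def stp (s n : ℕ) (p : ℕ × ℕ) : ℕ × ℕ :=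
  Option.casesOn (Code.evaln s (Denumerable.ofNat Code n) (Nat.pair (2 * p.1 + 1) (p.2 + 1)))
    (2 * p.1, p.2 + 1) (fun t => ((2 * p.1 + 1) * 2 ^ (t + 1) + 1, p.2 + t + 2))

/-- the state after `n` requirements, at stage `s` -/
def stt (s n : ℕ) : ℕ × ℕ := Nat.rec (motive := fun _ => ℕ × ℕ) (0, 0) (fun y p => stp s y p) n

/-- right endpoint -/
def hi (p : ℕ × ℕ) : ℚ := dy (p.1 + 1, p.2)

theorem lo_le_hi (p : ℕ × ℕ) : dy p ≤ hi p := by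
  unfold hi dy; gcongr; simp

theorem none_lo (p : ℕ × ℕ) : dy (2 * p.1, p.2 + 1) = dy p := by
  unfold dy; push_cast; rw [pow_succ]; field_simp
theorem none_hi (p : ℕ × ℕ) : hi (2 * p.1, p.2 + 1) = dy (2 * p.1 + 1, p.2 + 1) := rfl
theorem mid_le (p : ℕ × ℕ) : dy (2 * p.1 + 1, p.2 + 1) ≤ hi p := by
  unfold hi dy; push_cast; rw [pow_succ, div_le_div_iff₀ (by positivity) (by positivity)]
  have : (0:ℚ) < 2 ^ p.2 := by positivity
  nlinarith
theorem lo_mid (p : ℕ × ℕ) : dy p ≤ dy (2 * p.1 + 1, p.2 + 1) := by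
  unfold dy; push_cast; rw [pow_succ, div_le_div_iff₀ (by positivity) (by positivity)]
  have : (0:ℚ) < 2 ^ p.2 := by positivity
  nlinarith
theorem some_lo (p : ℕ × ℕ) (t : ℕ) :
    dy ((2 * p.1 + 1) * 2 ^ (t + 1) + 1, p.2 + t + 2) = dy (2 * p.1 + 1, p.2 + 1) + 1 / 2 ^ (p.2 + t + 2) := by
  unfold dy; push_cast
  have : (2:ℚ) ^ (p.2 + t + 2) = 2 ^ (p.2 + 1) * 2 ^ (t + 1) := by rw [← pow_add]; congr 1; omega
  rw [this]; field_simp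
theorem some_hi (p : ℕ × ℕ) (t : ℕ) :
    hi ((2 * p.1 + 1) * 2 ^ (t + 1) + 1, p.2 + t + 2) = dy (2 * p.1 + 1, p.2 + 1) + 1 / 2 ^ (p.2 + t + 1) := by
  unfold hi dy; push_cast
  have : (2:ℚ) ^ (p.2 + t + 2) = 2 ^ (p.2 + 1) * 2 ^ (t + 1) := by rw [← pow_add]; congr 1; omega
  have h2 : (2:ℚ) ^ (p.2 + t + 1) = 2 ^ (p.2 + 1) * 2 ^ t := by rw [← pow_add]; congr 1; omega
  rw [this, h2, pow_succ _ t]; field_simp; ring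
theorem some_hi_le (p : ℕ × ℕ) (t : ℕ) :
    hi ((2 * p.1 + 1) * 2 ^ (t + 1) + 1, p.2 + t + 2) ≤ hi p := by
  rw [some_hi]
  have h1 : (1:ℚ) / 2 ^ (p.2 + t + 1) ≤ 1 / 2 ^ (p.2 + 1) :=
    one_div_le_one_div_of_le (by positivity) (pow_le_pow_right₀ (by norm_num) (by omega))
  have h2 : dy (2 * p.1 + 1, p.2 + 1) + 1 / 2 ^ (p.2 + 1) = hi p := by
    unfold hi dy; push_cast; rw [pow_succ]; field_simp; ring
  linarith

theorem stp_lo (s n : ℕ) (p : ℕ × ℕ) : dy p ≤ dy (stp s n p) := by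
  unfold stp
  cases Nat.Partrec.Code.evaln s (Denumerable.ofNat Nat.Partrec.Code n) (Nat.pair (2 * p.1 + 1) (p.2 + 1)) with
  | none => exact (none_lo p).ge
  | some t =>
    show _ ≤ dy ((2 * p.1 + 1) * 2 ^ (t + 1) + 1, p.2 + t + 2)
    rw [some_lo]
    have := lo_mid p
    have h2 : (0:ℚ) ≤ 1 / 2 ^ (p.2 + t + 2) := by positivity
    linarith

theorem stp_hi (s n : ℕ) (p : ℕ × ℕ) : hi (stp s n p) ≤ hi p := by
  unfold stp
  cases Nat.Partrec.Code.evaln s (Denumerable.ofNat Nat.Partrec.Code n) (Nat.pair (2 * p.1 + 1) (p.2 + 1)) with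
  | none => exact mid_le p
  | some t => exact some_hi_le p t

theorem stp_mono {s s' : ℕ} (h : s ≤ s') (n : ℕ) (p : ℕ × ℕ) :
    stp s n p = stp s' n p ∨ hi (stp s n p) ≤ dy (stp s' n p) := by
  unfold stp
  cases h1 : Nat.Partrec.Code.evaln s (Denumerable.ofNat Nat.Partrec.Code n) (Nat.pair (2 * p.1 + 1) (p.2 + 1)) with
  | none =>
    cases h2 : Nat.Partrec.Code.evaln s' (Denumerable.ofNat Nat.Partrec.Code n) (Nat.pair (2 * p.1 + 1) (p.2 + 1)) with
    | none => exact Or.inl rfl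
    | some t =>
      right
      show hi (2 * p.1, p.2 + 1) ≤ dy ((2 * p.1 + 1) * 2 ^ (t + 1) + 1, p.2 + t + 2)
      rw [some_lo, none_hi]
      have h2 : (0:ℚ) ≤ 1 / 2 ^ (p.2 + t + 2) := by positivity
      linarith
  | some t =>
    rw [show Nat.Partrec.Code.evaln s' _ _ = some t from Nat.Partrec.Code.evaln_mono h h1]
    exact Or.inl rfl

theorem stt_mono {s s' : ℕ} (h : s ≤ s') (n : ℕ) :
    stt s n = stt s' n ∨ hi (stt s n) ≤ dy (stt s' n) := by
  induction n with
  | zero => exact Or.inl rfl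
  | succ n ih =>
    show stp s n (stt s n) = stp s' n (stt s' n) ∨ hi (stp s n (stt s n)) ≤ dy (stp s' n (stt s' n))
    rcases ih with ih | ih
    · rw [ih]; exact stp_mono h n _
    · exact Or.inr ((stp_hi _ _ _).trans (ih.trans (stp_lo _ _ _)))

theorem stt_lo {s n n' : ℕ} (h : n ≤ n') : dy (stt s n) ≤ dy (stt s n') := by
  induction h with
  | refl => exact le_rfl
  | step _ ih => exact ih.trans (stp_lo _ _ _)

theorem stt_hi {s n n' : ℕ} (h : n ≤ n') : hi (stt s n') ≤ hi (stt s n) := by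
  induction h with
  | refl => exact le_rfl
  | step _ ih => exact (stp_hi _ _ _).trans ih

theorem a_mono : Monotone (fun s => dy (stt s s)) := by
  intro s s' h
  have h1 : dy (stt s s) ≤ dy (stt s' s) := by
    rcases stt_mono h s with h | h
    · rw [h]
    · exact (lo_le_hi _).trans h
  exact h1.trans (stt_lo h)

theorem stt_stable (n : ℕ) : ∃ s0, ∀ s, s0 ≤ s → stt s n = stt s0 n := by
  induction n with
  | zero => exact ⟨0, fun _ _ => rfl⟩
  | succ n ih =>
    obtain ⟨s0, h0⟩ := ih
    by_cases hex : ∃ s1 t, Nat.Partrec.Code.evaln s1 (Denumerable.ofNat Nat.Partrec.Code n) (Nat.pair (2 * (stt s0 n).1 + 1) ((stt s0 n).2 + 1)) = some t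
    · obtain ⟨s1, t, h1⟩ := hex
      have key : ∀ s, max s0 s1 ≤ s → stt s (n+1) = ((2 * (stt s0 n).1 + 1) * 2 ^ (t + 1) + 1, (stt s0 n).2 + t + 2) := by
        intro s hs
        show stp s n (stt s n) = _
        rw [h0 s ((le_max_left _ _).trans hs)]
        unfold stp
        rw [show Nat.Partrec.Code.evaln s _ _ = some t from Nat.Partrec.Code.evaln_mono ((le_max_right _ _).trans hs) h1]
      exact ⟨max s0 s1, fun s hs => (key s hs).trans (key _ le_rfl).symm⟩
    · push Not at hex
      have key : ∀ s, s0 ≤ s → stt s (n+1) = (2 * (stt s0 n).1, (stt s0 n).2 + 1) := by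
        intro s hs
        show stp s n (stt s n) = _
        rw [h0 s hs]
        unfold stp
        rw [Option.eq_none_iff_forall_ne_some.2 (hex s)]
      exact ⟨s0, fun s hs => (key s hs).trans (key _ le_rfl).symm⟩

theorem comp_a : Computable (fun s => dy (stt s s)) := by
  have hq : Primrec (fun x : ℕ × ℕ × ℕ × ℕ => (2 * x.2.2.1 + 1)) :=
    Primrec.succ.comp (Primrec.nat_mul.comp (Primrec.const 2) (Primrec.fst.comp (Primrec.snd.comp Primrec.snd)))
  have hk : Primrec (fun x : ℕ × ℕ × ℕ × ℕ => x.2.2.2) :=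
    Primrec.snd.comp (Primrec.snd.comp Primrec.snd)
  have he : Primrec (fun x : ℕ × ℕ × ℕ × ℕ => Nat.Partrec.Code.evaln x.1 (Denumerable.ofNat Nat.Partrec.Code x.2.1) (Nat.pair (2 * x.2.2.1 + 1) (x.2.2.2 + 1))) :=
    Nat.Partrec.Code.primrec_evaln.comp
      (Primrec.pair (Primrec.pair Primrec.fst ((Primrec.ofNat Nat.Partrec.Code).comp (Primrec.fst.comp Primrec.snd)))
        (Primrec₂.natPair.comp hq (Primrec.succ.comp hk)))
  have h0 : Primrec (fun x : ℕ × ℕ × ℕ × ℕ => (2 * x.2.2.1, x.2.2.2 + 1)) :=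
    Primrec.pair (Primrec.nat_mul.comp (Primrec.const 2) (Primrec.fst.comp (Primrec.snd.comp Primrec.snd))) (Primrec.succ.comp hk)
  have h1 : Primrec₂ (fun (x : ℕ × ℕ × ℕ × ℕ) (t : ℕ) => ((2 * x.2.2.1 + 1) * 2 ^ (t + 1) + 1, x.2.2.2 + t + 2)) := by
    refine Primrec.pair (Primrec.succ.comp (Primrec.nat_mul.comp (hq.comp Primrec.fst) (prim_pow.comp (Primrec.succ.comp Primrec.snd)))) ?_
    exact Primrec.nat_add.comp (Primrec.nat_add.comp (hk.comp Primrec.fst) Primrec.snd) (Primrec.const 2)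
  have hs : Primrec (fun x : ℕ × ℕ × ℕ × ℕ => stp x.1 x.2.1 x.2.2) :=
    (Primrec.option_casesOn he h0 h1)
  have hs2 : Primrec₂ (fun (s : ℕ) (y : ℕ × ℕ × ℕ) => stp s y.1 y.2) := hs
  have : Primrec (fun s : ℕ => stt s s) := Primrec.nat_rec' Primrec.id (Primrec.const (0,0)) hs2
  exact comp_dy.comp this.to_comp

theorem exists_alpha : ∃ α : ℝ, LeftCE α ∧ ∀ F : ℕ → ℕ, Computable F →
    ∃ p : ℕ × ℕ, ((dy p : ℚ) : ℝ) < α ∧ α ≤ (dy p : ℚ) + 1 / 2 ^ F (Nat.pair p.1 p.2) := by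
  have hmono : Monotone (fun s => ((dy (stt s s) : ℚ) : ℝ)) := fun s s' h => by
    exact Rat.cast_le.2 (a_mono h)
  have hb : BddAbove (Set.range (fun s => ((dy (stt s s) : ℚ) : ℝ))) := by
    refine ⟨1, ?_⟩
    rintro _ ⟨s, rfl⟩
    have h1 : dy (stt s s) ≤ hi (stt s 0) := (lo_le_hi _).trans (stt_hi (Nat.zero_le _))
    have h2 : hi (stt s 0) = 1 := by show hi (0,0) = 1; simp [hi, dy]
    rw [h2] at h1
    have h3 : ((dy (stt s s) : ℚ) : ℝ) ≤ ((1 : ℚ) : ℝ) := Rat.cast_le.2 h1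
    simpa using h3
  have ht := tendsto_atTop_ciSup hmono hb
  refine ⟨_, ⟨_, comp_a, a_mono, ht⟩, fun F hF => ?_⟩
  set α := ⨆ s, ((dy (stt s s) : ℚ) : ℝ)
  obtain ⟨c, hc⟩ := Nat.Partrec.Code.exists_code.1 (Partrec.nat_iff.1 hF)
  have hc0 := hc
  obtain ⟨s0, h0⟩ := stt_stable (encode c)
  set p := stt s0 (encode c) with hp
  have hev : F (Nat.pair (2 * p.1 + 1) (p.2 + 1)) ∈ c.eval (Nat.pair (2 * p.1 + 1) (p.2 + 1)) := by
    rw [hc]; exact Part.mem_some _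
  obtain ⟨s1, h1⟩ := Nat.Partrec.Code.evaln_complete.1 hev
  set t := F (Nat.pair (2 * p.1 + 1) (p.2 + 1)) with htt
  have key : ∀ s, max (max s0 s1) (encode c + 1) ≤ s → stt s (encode c + 1) = ((2 * p.1 + 1) * 2 ^ (t + 1) + 1, p.2 + t + 2) := by
    intro s hs
    show stp s (encode c) (stt s (encode c)) = _
    rw [h0 s (by omega)]
    unfold stp
    rw [Denumerable.ofNat_encode, show Nat.Partrec.Code.evaln s _ _ = some t from Nat.Partrec.Code.evaln_mono (by omega) h1]
  refine ⟨(2 * p.1 + 1, p.2 + 1), ?_, ?_⟩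
  · have : ((dy (2 * p.1 + 1, p.2 + 1) + 1 / 2 ^ (p.2 + t + 2) : ℚ) : ℝ) ≤ α := by
      refine ge_of_tendsto ht ?_
      filter_upwards [Filter.eventually_ge_atTop (max (max s0 s1) (encode c + 1))] with s hs
      have h2 := stt_lo (s := s) (n := encode c + 1) (n' := s) (by omega)
      rw [key s hs, some_lo] at h2
      exact_mod_cast h2
    refine lt_of_lt_of_le ?_ this
    push_cast
    have : (0:ℝ) < 1 / 2 ^ (p.2 + t + 2) := by positivity
    linarith
  · refine le_of_tendsto ht ?_
    filter_upwards [Filter.eventually_ge_atTop (max (max s0 s1) (encode c + 1))] with s hs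
    have h2 := (lo_le_hi (stt s s)).trans (stt_hi (s := s) (n := encode c + 1) (n' := s) (by omega))
    rw [key s hs, some_hi] at h2
    have h3 : (1:ℚ) / 2 ^ (p.2 + t + 1) ≤ 1 / 2 ^ t :=
      one_div_le_one_div_of_le (by positivity) (pow_le_pow_right₀ (by norm_num) (by omega))
    have h4 : dy (stt s s) ≤ dy (2 * p.1 + 1, p.2 + 1) + 1 / 2 ^ t := by linarith
    have h5 : ((dy (stt s s) : ℚ) : ℝ) ≤ ((dy (2 * p.1 + 1, p.2 + 1) + 1 / 2 ^ t : ℚ) : ℝ) := by exact_mod_cast h4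
    push_cast at h5
    exact h5

/-- scaled distance of two rationals -/
def dst (x y : ℚ) : ℕ :=
  ((x.num.toNat * y.den + (-y.num).toNat * x.den) - ((-x.num).toNat * y.den + y.num.toNat * x.den)) +
  (((-x.num).toNat * y.den + y.num.toNat * x.den) - (x.num.toNat * y.den + (-y.num).toNat * x.den))

theorem dst_eq (x y : ℚ) : (dst x y : ℚ) = |x - y| * (x.den * y.den) := by
  have aux : ∀ A B : ℕ, (((A - B) + (B - A) : ℕ) : ℚ) = |(A : ℚ) - B| := by
    intro A B
    rcases le_total A B with h | h
    · rw [Nat.sub_eq_zero_of_le h, zero_add, Nat.cast_sub h, abs_sub_comm, abs_of_nonneg]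
      rw [sub_nonneg]; exact_mod_cast h
    · rw [Nat.sub_eq_zero_of_le h, add_zero, Nat.cast_sub h, abs_of_nonneg]
      rw [sub_nonneg]; exact_mod_cast h
  have hz : ∀ z : ℤ, ((z.toNat : ℚ) - ((-z).toNat : ℚ)) = z := by
    intro z
    have : ((z.toNat : ℤ) - ((-z).toNat : ℤ)) = z := by omega
    exact_mod_cast this
  unfold dst
  rw [aux]
  have h1 : (0:ℚ) ≤ x.den * y.den := by positivity
  have h2 : |x - y| * (x.den * y.den) = |(x - y) * (x.den * y.den)| := by
    rw [abs_mul, abs_of_nonneg h1]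
  rw [h2]
  congr 1
  push_cast
  have hx := hz x.num
  have hy := hz y.num
  have hx' := Rat.mul_den_eq_num x
  have hy' := Rat.mul_den_eq_num y
  calc _ = ((x.num.toNat : ℚ) - ((-x.num).toNat : ℚ)) * y.den - ((y.num.toNat : ℚ) - ((-y.num).toNat : ℚ)) * x.den := by ring
    _ = _ := by rw [hx, hy, ← hx', ← hy']; ring

theorem comp_dst {β : Type*} [Primcodable β] {f g : β → ℚ} (hf : Computable f) (hg : Computable g) :
    Computable (fun b => dst (f b) (g b)) := by
  have m := Primrec.nat_mul.to_comp
  have ad := Primrec.nat_add.to_comp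
  have sb := Primrec.nat_sub.to_comp
  have A := ad.comp (m.comp (comp_pos.comp hf) (comp_den.comp hg)) (m.comp (comp_neg.comp hg) (comp_den.comp hf))
  have B := ad.comp (m.comp (comp_neg.comp hf) (comp_den.comp hg)) (m.comp (comp_pos.comp hg) (comp_den.comp hf))
  exact ad.comp (sb.comp A B) (sb.comp B A)

theorem exists_delta (γ : ℝ) (h : TotalSolovayReducible γ 1) :
    ∃ δ : ℚ → ℕ, Computable δ ∧ ∀ r : ℚ, (r : ℝ) < γ → 1 / 2 ^ δ r ≤ γ - r := by
  by_cases hg : ∃ g : ℚ, (g : ℝ) = γ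
  · obtain ⟨g, rfl⟩ := hg
    refine ⟨fun r => dst g r * 0 + g.den * r.den, ?_, fun r hr => ?_⟩
    · exact (Primrec.nat_mul.to_comp.comp (Computable.const g.den) comp_den).of_eq fun r => by simp
    · have hr' : r < g := by exact_mod_cast hr
      have h1 := dst_eq g r
      rw [abs_of_pos (by linarith)] at h1
      have hd : (0:ℚ) < g.den * r.den := by
        have := g.den_pos; have := r.den_pos; positivity
      have h2 : (0:ℚ) < dst g r := by rw [h1]; exact mul_pos (by linarith) hd
      have h3 : (1:ℚ) ≤ dst g r := by
        have : 0 < dst g r := by exact_mod_cast h2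
        exact_mod_cast this
      have h4 : (1:ℚ) / (g.den * r.den) ≤ g - r := by
        rw [div_le_iff₀ hd]; linarith
      have h5 : ((g.den * r.den : ℕ) : ℚ) ≤ 2 ^ (g.den * r.den) := by
        exact_mod_cast (Nat.lt_two_pow_self (n := g.den * r.den)).le
      push_cast at h5
      have h6 : (1:ℚ) / 2 ^ (g.den * r.den) ≤ g - r := (one_div_le_one_div_of_le hd h5).trans h4
      have h7 : ((1 / 2 ^ (g.den * r.den) : ℚ) : ℝ) ≤ ((g - r : ℚ) : ℝ) := by exact_mod_cast h6
      push_cast at h7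
      simpa using h7
  · push Not at hg
    obtain ⟨c, hc, f, hf, H⟩ := h
    obtain ⟨C, hC⟩ := exists_nat_gt (max c 1)
    have hCc : (c : ℝ) < C := by exact_mod_cast (le_max_left _ _).trans_lt hC
    have hC1 : (1 : ℝ) < C := by exact_mod_cast (le_max_right _ _).trans_lt hC
    let b : ℕ → ℚ := fun n => f (dy (2 ^ n - 1, n))
    have hb : Computable b :=
      hf.comp (comp_dy.comp (Primrec.pair (Primrec.nat_sub.comp prim_pow (Primrec.const 1)) Primrec.id).to_comp)
    have hbn : ∀ n, (b n : ℝ) < γ ∧ γ - b n < C / 2 ^ n := by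
      intro n
      have e : ((dy (2 ^ n - 1, n) : ℚ) : ℝ) = 1 - 1 / 2 ^ n := by
        unfold dy
        push_cast [Nat.one_le_two_pow]
        field_simp
      have hpos : (0:ℝ) < 1 / 2 ^ n := by positivity
      obtain ⟨h1, h2⟩ := H (dy (2 ^ n - 1, n)) (by rw [e]; linarith)
      refine ⟨h1, h2.trans ?_⟩
      rw [e, div_eq_mul_one_div (C:ℝ)]
      have : (1:ℝ) - (1 - 1 / 2 ^ n) = 1 / 2 ^ n := by ring
      rw [this]
      exact mul_lt_mul_of_pos_right hCc hpos
    let P : ℚ → ℕ → Prop := fun r n => C * ((b n).den * r.den) ≤ dst (b n) r * 2 ^ n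
    have hP : ∀ r n, P r n ↔ (C : ℝ) / 2 ^ n ≤ |(b n : ℝ) - r| := by
      intro r n
      have hd : (0:ℚ) < (b n).den * r.den := by
        have := (b n).den_pos; have := r.den_pos; positivity
      have h1 := dst_eq (b n) r
      have : P r n ↔ (C : ℚ) / 2 ^ n ≤ |b n - r| := by
        rw [div_le_iff₀ (by positivity)]
        have : P r n ↔ (C : ℚ) * ((b n).den * r.den) ≤ dst (b n) r * 2 ^ n := by
          simp only [P]; exact_mod_cast Iff.rfl
        rw [this, h1, mul_right_comm]
        exact mul_le_mul_iff_left₀ hd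
      rw [this, ← Rat.cast_le (K := ℝ)]
      push_cast
      exact Iff.rfl
    have hex : ∀ r, ∃ n, P r n := by
      intro r
      have hpos : 0 < |γ - r| := abs_pos.2 (sub_ne_zero.2 (hg r).symm)
      have : ∃ n : ℕ, 2 * C / |γ - r| < (2:ℝ) ^ n := pow_unbounded_of_one_lt _ (by norm_num)
      obtain ⟨n, hn⟩ := this
      refine ⟨n, (hP r n).2 ?_⟩
      obtain ⟨h1, h2⟩ := hbn n
      rw [div_lt_iff₀ hpos] at hn
      have h3 : 2 * ((C:ℝ) / 2 ^ n) < |γ - r| := by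
        rw [← mul_div_assoc, div_lt_iff₀ (by positivity)]; linarith
      have h4 : |γ - r| ≤ |γ - b n| + |(b n : ℝ) - r| := abs_sub_le _ _ _
      rw [abs_of_pos (a := γ - b n) (by linarith)] at h4
      linarith
    have hd : Computable₂ (fun r n => decide (P r n)) := by
      have m := Primrec.nat_mul.to_comp
      have e0 : Computable (fun x : ℚ × ℕ => b x.2) := hb.comp Computable.snd
      have e1 : Computable (fun x : ℚ × ℕ => C * ((b x.2).den * x.1.den)) :=
        m.comp (Computable.const C) (m.comp (comp_den.comp e0) (comp_den.comp Computable.fst))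
      have e2 : Computable (fun x : ℚ × ℕ => dst (b x.2) x.1 * 2 ^ x.2) :=
        m.comp (comp_dst e0 Computable.fst) (prim_pow.to_comp.comp Computable.snd)
      exact Primrec.nat_le.decide.to_comp.comp e1 e2
    refine ⟨_, comp_find P hd hex, fun r hr => ?_⟩
    have h1 := (hP _ _).1 (Nat.find_spec (hex r))
    set n := Nat.find (hex r)
    obtain ⟨h2, h3⟩ := hbn n
    have h4 : (1:ℝ) / 2 ^ n ≤ C / 2 ^ n := by gcongr
    rcases le_abs.1 h1 with h | h
    · linarith
    · linarith

theorem no_least_totalSolovay_degree :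
    ¬ ∃ γ : ℝ, LeftCE γ ∧ ∀ α : ℝ, LeftCE α → TotalSolovayReducible γ α := by
  rintro ⟨γ, -, H⟩
  obtain ⟨δ, hδ, hδ'⟩ := exists_delta γ (H 1 ⟨fun _ => 1, Computable.const 1, monotone_const, by
    simp⟩)
  obtain ⟨α, hα, hF⟩ := exists_alpha
  obtain ⟨c, hc, f, hf, h⟩ := H α hα
  obtain ⟨C, hC⟩ := exists_nat_gt c
  have hcomp : Computable (fun j : ℕ => δ (f (dy j.unpair)) + C) :=
    Primrec.nat_add.to_comp.comp (hδ.comp (hf.comp (comp_dy.comp Computable.unpair))) (Computable.const C)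
  obtain ⟨p, h1, h2⟩ := hF _ hcomp
  simp only [Nat.unpair_pair, Prod.mk.eta] at h2
  obtain ⟨h3, h4⟩ := h _ h1
  have h5 := hδ' _ h3
  set d := δ (f (dy p))
  have hc' : (0:ℝ) < c := by exact_mod_cast hc
  have hcC : (c : ℝ) ≤ 2 ^ C := by
    have e1 : (c : ℝ) < C := by exact_mod_cast hC
    have e2 : (C : ℝ) < 2 ^ C := by exact_mod_cast Nat.lt_two_pow_self
    linarith
  have h6 : (c : ℝ) * (α - dy p) ≤ 2 ^ C * (1 / 2 ^ (d + C)) :=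
    mul_le_mul hcC (by linarith) (by linarith) (by positivity)
  have h7 : (2:ℝ) ^ C * (1 / 2 ^ (d + C)) = 1 / 2 ^ d := by
    rw [pow_add]; field_simp
  linarith
end

section
/- There exists a countably infinite family (α_i)_{i∈ℕ} of left-c.e. reals such that for all i ≠ j the reals α_i and α_j are ≤_S^tot-incomparable (neither α_i ≤_S^tot α_j nor α_j ≤_S^tot α_i), and such that each α_i is ≤_S^tot-incomparable with every computable real. -/
/-- A real is computable if some computable sequence of rationals approximates it
with error at most `2^{-n}` at stage `n`. -/
def ComputableReal (γ : ℝ) : Prop :=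
  ∃ q : ℕ → ℚ, Computable q ∧ ∀ n, |γ - (q n : ℝ)| ≤ (2 : ℝ)⁻¹ ^ n

namespace TSA

def encE (q : ℚ) : ℕ := Nat.pair (Equiv.intEquivNat q.num) q.den

def PosP (u : ℕ) : ℕ := if u % 2 = 0 then u / 2 else 0
def NegP (u : ℕ) : ℕ := if u % 2 = 0 then 0 else (u + 1) / 2

def Good (n : ℕ) : Prop :=
  0 < n.unpair.2 ∧ ∀ k < n + 1, (n.unpair.1 + 1) / 2 % k = 0 ∧ n.unpair.2 % k = 0 → k = 1

lemma intEquiv_ofNat (n : ℕ) : Equiv.intEquivNat (Int.ofNat n) = 2 * n := rfl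
lemma intEquiv_negSucc (n : ℕ) : Equiv.intEquivNat (Int.negSucc n) = 2 * n + 1 := rfl

lemma int_natAbs (z : ℤ) : (Equiv.intEquivNat z + 1) / 2 = z.natAbs := by
  cases z with
  | ofNat n => rw [intEquiv_ofNat]; simp; omega
  | negSucc n => rw [intEquiv_negSucc]; simp; omega

lemma int_posneg (z : ℤ) :
    z = (PosP (Equiv.intEquivNat z) : ℤ) - NegP (Equiv.intEquivNat z) := by
  cases z with
  | ofNat n => rw [intEquiv_ofNat]; simp [PosP, NegP]
  | negSucc n =>
    rw [intEquiv_negSucc]; unfold PosP NegP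
    rw [if_neg (by omega), if_neg (by omega)]; omega

lemma good_iff (n : ℕ) : Good n ↔ ∃ q, encE q = n := by
  constructor
  · rintro ⟨h1, h2⟩
    set z := Equiv.intEquivNat.symm n.unpair.1 with hz
    have hz' : Equiv.intEquivNat z = n.unpair.1 := by simp [hz]
    have hc : z.natAbs.Coprime n.unpair.2 := by
      have := h2 (Nat.gcd z.natAbs n.unpair.2) ?_ ?_
      · exact this
      · have := Nat.gcd_le_right z.natAbs h1
        have := Nat.unpair_right_le n
        omega
      · rw [← hz', int_natAbs]
        exact ⟨Nat.mod_eq_zero_of_dvd (Nat.gcd_dvd_left _ _),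
          Nat.mod_eq_zero_of_dvd (Nat.gcd_dvd_right _ _)⟩
    refine ⟨⟨z, n.unpair.2, by omega, hc⟩, ?_⟩
    simp [encE, hz']
  · rintro ⟨q, rfl⟩
    refine ⟨by simpa [encE] using q.pos, ?_⟩
    simp only [encE, Nat.unpair_pair, int_natAbs]
    rintro k - ⟨ha, hb⟩
    have := Nat.dvd_gcd (Nat.dvd_of_mod_eq_zero ha) (Nat.dvd_of_mod_eq_zero hb)
    rw [show Nat.gcd q.num.natAbs q.den = 1 from q.reduced] at this
    exact Nat.dvd_one.1 this

lemma encE_inj {p q : ℚ} (h : encE p = encE q) : p = q := by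
  unfold encE at h
  rw [Nat.pair_eq_pair] at h
  exact Rat.ext (Equiv.injective _ h.1) h.2

lemma primrec_good : PrimrecPred Good := by
  have hu1 : Primrec fun n : ℕ => n.unpair.1 := Primrec.fst.comp Primrec.unpair
  have hu2 : Primrec fun n : ℕ => n.unpair.2 := Primrec.snd.comp Primrec.unpair
  refine PrimrecPred.and (Primrec.nat_lt.comp (Primrec.const 0) hu2) ?_
  have hR : PrimrecRel (fun k n : ℕ =>
      (n.unpair.1 + 1) / 2 % k = 0 ∧ n.unpair.2 % k = 0 → k = 1) := by
    have : PrimrecPred (fun p : ℕ × ℕ =>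
      ¬ ((p.2.unpair.1 + 1) / 2 % p.1 = 0 ∧ p.2.unpair.2 % p.1 = 0) ∨ p.1 = 1) := by
      refine PrimrecPred.or (PrimrecPred.not (PrimrecPred.and ?_ ?_)) ?_
      · exact Primrec.eq.comp (Primrec.nat_mod.comp (Primrec.nat_div.comp
          (Primrec.succ.comp (hu1.comp Primrec.snd)) (Primrec.const 2)) Primrec.fst) (Primrec.const 0)
      · exact Primrec.eq.comp (Primrec.nat_mod.comp (hu2.comp Primrec.snd) Primrec.fst)
          (Primrec.const 0)
      · exact Primrec.eq.comp Primrec.fst (Primrec.const 1)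
    exact this.of_eq fun p => by tauto
  exact (hR.forall_lt).comp Primrec.succ Primrec.id

open Classical in
noncomputable def cnt (n : ℕ) : ℕ := ((List.range n).filter (fun m => decide (Good m))).length

open Classical in
lemma primrec_cnt : Primrec cnt :=
  Primrec.list_length.comp ((Primrec.listFilter primrec_good).comp Primrec.list_range)

lemma encode_rat (q : ℚ) : @Encodable.encode ℚ Primcodable.toEncodable q = cnt (encE q) := by
  have h : @Encodable.encode ℚ Primcodable.toEncodable q = (List.range (encE q)).countP
     (fun m => @decide (m ∈ Set.range (@Encodable.encode ℚ Rat.instEncodable))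
        (Encodable.decidableRangeEncode ℚ m)) := rfl
  rw [h, cnt, List.countP_eq_length_filter]
  congr 2
  funext m
  congr 1
  exact propext (good_iff m).symm

lemma exists_find {α : Type*} [Primcodable α] (p : α → ℕ → Bool) (hp : Computable₂ p)
    (hex : ∀ a, ∃ n, p a n = true) : ∃ g : α → ℕ, Computable g ∧ ∀ a, p a (g a) = true := by
  have h := Partrec.rfind (p := fun a n => Part.some (p a n)) hp.partrec₂
  have hd : ∀ a, (Nat.rfind (fun n => Part.some (p a n))).Dom := by
    intro a
    obtain ⟨n, hn⟩ := hex a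
    exact Nat.rfind_dom.2 ⟨n, by simp [hn], fun _ => trivial⟩
  refine ⟨fun a => (Nat.rfind (fun n => Part.some (p a n))).get (hd a), ?_, ?_⟩
  · exact h.of_eq_tot fun a => Part.get_mem _
  · intro a
    have := Nat.rfind_spec (Part.get_mem (hd a))
    exact (Part.mem_some_iff.1 this).symm

def mk (t : ℕ × ℕ × ℕ) : ℚ := ((t.1 : ℚ) - t.2.1) / (t.2.2 + 1)

lemma primrec_PosP : Primrec PosP :=
  Primrec.ite (Primrec.eq.comp (Primrec.nat_mod.comp Primrec.id (Primrec.const 2)) (Primrec.const 0))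
    (Primrec.nat_div.comp Primrec.id (Primrec.const 2)) (Primrec.const 0)
lemma primrec_NegP : Primrec NegP :=
  Primrec.ite (Primrec.eq.comp (Primrec.nat_mod.comp Primrec.id (Primrec.const 2)) (Primrec.const 0))
    (Primrec.const 0) (Primrec.nat_div.comp Primrec.succ (Primrec.const 2))

lemma mk_iff (t : ℕ × ℕ × ℕ) (q : ℚ) : q = mk t ↔
    PosP (encE q).unpair.1 * (t.2.2 + 1) + t.2.1 * (encE q).unpair.2 =
     NegP (encE q).unpair.1 * (t.2.2 + 1) + t.1 * (encE q).unpair.2 := by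
  simp only [encE, Nat.unpair_pair]
  have h1 := int_posneg q.num
  set P := PosP (Equiv.intEquivNat q.num)
  set N := NegP (Equiv.intEquivNat q.num)
  have hq : q = ((P : ℚ) - N) / q.den := by
    conv_lhs => rw [← Rat.num_div_den q, h1]
    push_cast; rfl
  have hd : (q.den : ℚ) ≠ 0 := by exact_mod_cast q.den_nz
  have hd' : (t.2.2 : ℚ) + 1 ≠ 0 := by positivity
  conv_lhs => rw [hq, mk, div_eq_div_iff hd hd']
  rw [← Nat.cast_inj (R := ℚ)]
  push_cast
  constructor <;> intro h <;> linarith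

lemma computable_mk : Computable mk := by
  classical
  obtain ⟨g, hg, hg'⟩ := exists_find (α := ℕ × ℕ × ℕ) (fun t n => decide (Good n ∧
    PosP n.unpair.1 * (t.2.2 + 1) + t.2.1 * n.unpair.2 =
     NegP n.unpair.1 * (t.2.2 + 1) + t.1 * n.unpair.2)) (by
      apply Primrec.to_comp
      apply PrimrecPred.decide
      refine PrimrecPred.and (primrec_good.comp Primrec.snd) ?_
      have hu1 : Primrec fun p : (ℕ × ℕ × ℕ) × ℕ => p.2.unpair.1 :=
        Primrec.fst.comp (Primrec.unpair.comp Primrec.snd)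
      have hu2 : Primrec fun p : (ℕ × ℕ × ℕ) × ℕ => p.2.unpair.2 :=
        Primrec.snd.comp (Primrec.unpair.comp Primrec.snd)
      have ha : Primrec fun p : (ℕ × ℕ × ℕ) × ℕ => p.1.1 := Primrec.fst.comp Primrec.fst
      have hb : Primrec fun p : (ℕ × ℕ × ℕ) × ℕ => p.1.2.1 :=
        Primrec.fst.comp (Primrec.snd.comp Primrec.fst)
      have hc : Primrec fun p : (ℕ × ℕ × ℕ) × ℕ => p.1.2.2 + 1 :=
        Primrec.succ.comp (Primrec.snd.comp (Primrec.snd.comp Primrec.fst))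
      exact Primrec.eq.comp
        (Primrec.nat_add.comp (Primrec.nat_mul.comp (primrec_PosP.comp hu1) hc)
          (Primrec.nat_mul.comp hb hu2))
        (Primrec.nat_add.comp (Primrec.nat_mul.comp (primrec_NegP.comp hu1) hc)
          (Primrec.nat_mul.comp ha hu2)))
    (by
      intro t
      refine ⟨encE (mk t), decide_eq_true ⟨(good_iff _).2 ⟨_, rfl⟩, (mk_iff t _).1 rfl⟩⟩)
  rw [← Computable.encode_iff]
  refine (primrec_cnt.to_comp.comp hg).of_eq fun t => ?_
  obtain ⟨h1, h2⟩ := of_decide_eq_true (hg' t)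
  obtain ⟨q, hq⟩ := (good_iff _).1 h1
  rw [← hq] at h2
  rw [encode_rat, ← (mk_iff t q).2 h2, ← hq]

lemma mk_surj (q : ℚ) : ∃ t, mk t = q := by
  refine ⟨(q.num.toNat, (-q.num).toNat, q.den - 1), ?_⟩
  have h1 : ((q.num.toNat : ℤ) - ((-q.num).toNat : ℤ)) = q.num := by omega
  have h2 : q.den - 1 + 1 = q.den := Nat.sub_add_cancel q.pos
  have h1' : ((q.num.toNat : ℚ) - ((-q.num).toNat : ℚ)) = q.num := by exact_mod_cast h1
  have h2' : ((q.den - 1 : ℕ) : ℚ) + 1 = q.den := by exact_mod_cast h2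
  simp only [mk]
  rw [h1', h2', Rat.num_div_den]

lemma exists_rep : ∃ g : ℚ → ℕ × ℕ × ℕ, Computable g ∧ ∀ q, mk (g q) = q := by
  obtain ⟨g, hg, hg'⟩ := exists_find (α := ℚ)
    (fun q n => decide (mk (Denumerable.ofNat _ n) = q)) (by
      have h := (Primrec.eq (α := ℚ)).decide.to_comp
      exact h.comp (computable_mk.comp ((Computable.ofNat _).comp Computable.snd)) Computable.fst)
    (by
      intro q
      obtain ⟨t, ht⟩ := mk_surj q
      exact ⟨Encodable.encode t, by rw [Denumerable.ofNat_encode, ht]; simp⟩)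
  exact ⟨fun q => Denumerable.ofNat _ (g q), (Computable.ofNat _).comp hg,
    fun q => of_decide_eq_true (hg' q)⟩

lemma computable_lt : Computable (fun p : ℚ × ℚ => decide (p.1 < p.2)) := by
  obtain ⟨g, hg, hg'⟩ := exists_rep
  have hP : Primrec (fun p : (ℕ × ℕ × ℕ) × (ℕ × ℕ × ℕ) => decide
      (p.1.1 * (p.2.2.2 + 1) + p.2.2.1 * (p.1.2.2 + 1) <
        p.2.1 * (p.1.2.2 + 1) + p.1.2.1 * (p.2.2.2 + 1))) := by
    apply PrimrecPred.decide
    have a : Primrec fun p : ℕ × ℕ × ℕ => p.1 := Primrec.fst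
    have b : Primrec fun p : ℕ × ℕ × ℕ => p.2.1 := Primrec.fst.comp Primrec.snd
    have d : Primrec fun p : ℕ × ℕ × ℕ => p.2.2 + 1 := Primrec.succ.comp (Primrec.snd.comp Primrec.snd)
    have f := @Primrec.fst (ℕ × ℕ × ℕ) (ℕ × ℕ × ℕ) _ _
    have s := @Primrec.snd (ℕ × ℕ × ℕ) (ℕ × ℕ × ℕ) _ _
    exact Primrec.nat_lt.comp
      (Primrec.nat_add.comp (Primrec.nat_mul.comp (a.comp f) (d.comp s))
        (Primrec.nat_mul.comp (b.comp s) (d.comp f)))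
      (Primrec.nat_add.comp (Primrec.nat_mul.comp (a.comp s) (d.comp f))
        (Primrec.nat_mul.comp (b.comp f) (d.comp s)))
  refine (hP.to_comp.comp ((hg.comp Computable.fst).pair (hg.comp Computable.snd))).of_eq ?_
  rintro ⟨x, y⟩
  rw [decide_eq_decide]
  simp only
  conv_rhs => rw [← hg' x, ← hg' y, mk, mk, div_lt_div_iff₀ (by positivity) (by positivity)]
  rw [← Nat.cast_lt (α := ℚ)]
  push_cast
  constructor <;> intro h <;> linarith

lemma computable_sub : Computable (fun p : ℚ × ℚ => p.1 - p.2) := by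
  obtain ⟨g, hg, hg'⟩ := exists_rep
  have hP : Primrec (fun p : (ℕ × ℕ × ℕ) × (ℕ × ℕ × ℕ) =>
      ((p.1.1 * (p.2.2.2 + 1) + p.2.2.1 * (p.1.2.2 + 1),
        p.2.1 * (p.1.2.2 + 1) + p.1.2.1 * (p.2.2.2 + 1),
        (p.1.2.2 + 1) * (p.2.2.2 + 1) - 1) : ℕ × ℕ × ℕ)) := by
    have a : Primrec fun p : ℕ × ℕ × ℕ => p.1 := Primrec.fst
    have b : Primrec fun p : ℕ × ℕ × ℕ => p.2.1 := Primrec.fst.comp Primrec.snd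
    have d : Primrec fun p : ℕ × ℕ × ℕ => p.2.2 + 1 := Primrec.succ.comp (Primrec.snd.comp Primrec.snd)
    have f := @Primrec.fst (ℕ × ℕ × ℕ) (ℕ × ℕ × ℕ) _ _
    have s := @Primrec.snd (ℕ × ℕ × ℕ) (ℕ × ℕ × ℕ) _ _
    exact Primrec.pair
      (Primrec.nat_add.comp (Primrec.nat_mul.comp (a.comp f) (d.comp s))
        (Primrec.nat_mul.comp (b.comp s) (d.comp f)))
      (Primrec.pair (Primrec.nat_add.comp (Primrec.nat_mul.comp (a.comp s) (d.comp f))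
        (Primrec.nat_mul.comp (b.comp f) (d.comp s)))
        (Primrec.nat_sub.comp (Primrec.nat_mul.comp (d.comp f) (d.comp s)) (Primrec.const 1)))
  refine (computable_mk.comp
    (hP.to_comp.comp ((hg.comp Computable.fst).pair (hg.comp Computable.snd)))).of_eq ?_
  rintro ⟨x, y⟩
  simp only
  conv_rhs => rw [← hg' x, ← hg' y]
  have : 1 ≤ ((g x).2.2 + 1) * ((g y).2.2 + 1) := Nat.succ_le_of_lt (by positivity)
  simp only [mk]
  push_cast [Nat.cast_sub this]
  have h1 : ((g x).2.2 : ℚ) + 1 ≠ 0 := by positivity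
  have h2 : ((g y).2.2 : ℚ) + 1 ≠ 0 := by positivity
  rw [sub_add_cancel]
  field_simp
  ring


open Nat.Partrec (Code)
open Nat.Partrec.Code (evaln)

def vS (s e : ℕ) (h : List ℕ) : ℕ :=
  ((evaln s (Denumerable.ofNat Code e) (Encodable.encode h)).map Nat.succ).getD 0

def HH (s : ℕ) : ℕ → List ℕ
  | 0 => []
  | e + 1 => vS s e (HH s e) :: HH s e

def WW (h : List ℕ) : ℕ := h.foldr (fun v w => 16 * (v + 1) * w) 1

def DD (k v : ℕ) : ℕ := if v = 0 then 0 else if (v - 1).unpair.1 = k + 1 then 7 else 4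

def NN (k : ℕ) (h : List ℕ) : ℕ :=
  h.foldr (fun v n => 16 * (v + 1) * n + 2 * (v + 1) * DD k v + 1) 0

def lo (k : ℕ) (h : List ℕ) : ℚ := (NN k h : ℚ) / WW h
def hi (k : ℕ) (h : List ℕ) : ℚ := ((NN k h : ℚ) + 1) / WW h

lemma WW_cons (v : ℕ) (h : List ℕ) : WW (v :: h) = 16 * (v + 1) * WW h := rfl
lemma NN_cons (k v : ℕ) (h : List ℕ) :
    NN k (v :: h) = 16 * (v + 1) * NN k h + 2 * (v + 1) * DD k v + 1 := rfl

lemma WW_pos (h : List ℕ) : 0 < WW h := by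
  induction h with
  | nil => exact Nat.one_pos
  | cons v h ih => rw [WW_cons]; positivity

lemma DD_le (k v : ℕ) : DD k v ≤ 7 := by unfold DD; split_ifs <;> omega
lemma DD_ge (k v : ℕ) (hv : v ≠ 0) : 4 ≤ DD k v := by
  unfold DD; rw [if_neg hv]; split_ifs <;> omega

lemma lo_cons (k v : ℕ) (h : List ℕ) :
    lo k (v :: h) = lo k h + (DD k v / 8 + 1 / (16 * (v + 1))) / WW h := by
  have := WW_pos h
  have h1 : (WW h : ℚ) ≠ 0 := by positivity
  have h2 : (v : ℚ) + 1 ≠ 0 := by positivity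
  simp only [lo, NN_cons, WW_cons]
  push_cast
  field_simp
  ring

lemma hi_cons (k v : ℕ) (h : List ℕ) :
    hi k (v :: h) = lo k h + (DD k v / 8 + 2 / (16 * (v + 1))) / WW h := by
  have := WW_pos h
  have h1 : (WW h : ℚ) ≠ 0 := by positivity
  have h2 : (v : ℚ) + 1 ≠ 0 := by positivity
  simp only [lo, hi, NN_cons, WW_cons]
  push_cast
  field_simp
  ring

lemma hi_eq (k : ℕ) (h : List ℕ) : hi k h = lo k h + 1 / WW h := by
  simp only [lo, hi]; rw [add_div]

lemma lo_le_hi (k : ℕ) (h : List ℕ) : lo k h ≤ hi k h := by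
  rw [hi_eq]; have := WW_pos h; simp

lemma lo_le_cons (k v : ℕ) (h : List ℕ) : lo k h ≤ lo k (v :: h) := by
  rw [lo_cons]; have : (0 : ℚ) ≤ (DD k v / 8 + 1 / (16 * (v + 1))) / WW h := by positivity
  linarith

lemma frac_le (v : ℕ) : (2 : ℚ) / (16 * (v + 1)) ≤ 1 / 8 := by
  rw [div_le_div_iff₀ (by positivity) (by norm_num)]
  have : (0 : ℚ) ≤ v := by positivity
  linarith

lemma hi_cons_le (k v : ℕ) (h : List ℕ) : hi k (v :: h) ≤ hi k h := by
  rw [hi_cons, hi_eq]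
  have h1 : (DD k v : ℚ) ≤ 7 := by exact_mod_cast DD_le k v
  have h2 := frac_le v
  have := WW_pos h
  gcongr
  linarith

lemma act_le (k v : ℕ) (hv : v ≠ 0) (h : List ℕ) : hi k (0 :: h) ≤ lo k (v :: h) := by
  rw [hi_cons, lo_cons]
  have h1 : (4 : ℚ) ≤ DD k v := by exact_mod_cast DD_ge k v hv
  have h0 : DD k 0 = 0 := by simp [DD]
  have h2 : (0 : ℚ) ≤ 1 / (16 * (v + 1)) := by positivity
  have := WW_pos h
  rw [h0]
  have h3 : (((0 : ℕ) : ℚ) / 8 + 2 / (16 * (((0 : ℕ) : ℚ) + 1))) ≤ DD k v / 8 + 1 / (16 * (v + 1)) := by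
    have e : (((0 : ℕ) : ℚ) / 8 + 2 / (16 * (((0 : ℕ) : ℚ) + 1))) = 1 / 8 := by norm_num
    rw [e]
    linarith
  gcongr

lemma vS_mono {s t : ℕ} (hst : s ≤ t) (e : ℕ) (h : List ℕ) : vS s e h = 0 ∨ vS t e h = vS s e h := by
  unfold vS
  cases hc : evaln s (Denumerable.ofNat Code e) (Encodable.encode h) with
  | none => left; rfl
  | some r =>
    right
    have := Nat.Partrec.Code.evaln_mono hst (Option.mem_def.2 hc)
    rw [Option.mem_def.1 this]

lemma HH_mono {s t : ℕ} (hst : s ≤ t) (k e : ℕ) :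
    HH s e = HH t e ∨ hi k (HH s e) ≤ lo k (HH t e) := by
  induction e with
  | zero => left; rfl
  | succ e ih =>
    simp only [HH]
    rcases ih with ih | ih
    · rw [ih]
      rcases vS_mono hst e (HH t e) with h0 | h1
      · by_cases hv : vS t e (HH t e) = 0
        · left; rw [h0, hv]
        · right; rw [h0]; exact act_le k _ hv _
      · left; rw [h1]
    · right
      exact (hi_cons_le _ _ _).trans (ih.trans (lo_le_cons _ _ _))

lemma lo_mono_len (k s : ℕ) : Monotone fun e => lo k (HH s e) :=
  monotone_nat_of_le_succ fun _ => lo_le_cons _ _ _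
lemma hi_anti_len (k s : ℕ) : Antitone fun e => hi k (HH s e) :=
  antitone_nat_of_succ_le fun _ => hi_cons_le _ _ _

def aa (k s : ℕ) : ℚ := lo k (HH s s)

lemma aa_mono (k : ℕ) : Monotone (aa k) := by
  intro s t hst
  have h1 : lo k (HH s s) ≤ lo k (HH t s) := by
    rcases HH_mono hst k s with h | h
    · rw [h]
    · exact (lo_le_hi _ _).trans h
  exact h1.trans (lo_mono_len k t hst)

lemma aa_le_one (k s : ℕ) : aa k s ≤ 1 := by
  have h := (lo_le_hi k (HH s s)).trans (hi_anti_len k s (Nat.zero_le s))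
  have h' : hi k (HH s 0) = 1 := by simp [HH, hi, NN, WW]
  simp only [h'] at h
  exact h

lemma vS_lim (e : ℕ) (h : List ℕ) : ∃ v s0, ∀ s ≥ s0, vS s e h = v := by
  by_cases hx : ∃ s, vS s e h ≠ 0
  · obtain ⟨s, hs⟩ := hx
    exact ⟨vS s e h, s, fun t ht => (vS_mono ht e h).resolve_left hs⟩
  · push Not at hx
    exact ⟨0, 0, fun s _ => hx s⟩

lemma HH_lim (e : ℕ) : ∃ h s0, ∀ s ≥ s0, HH s e = h := by
  induction e with
  | zero => exact ⟨[], 0, fun _ _ => rfl⟩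
  | succ e ih =>
    obtain ⟨h, s0, hs0⟩ := ih
    obtain ⟨v, s1, hs1⟩ := vS_lim e h
    refine ⟨v :: h, max s0 s1, fun s hs => ?_⟩
    simp only [HH]
    rw [hs0 s (le_trans (le_max_left _ _) hs), hs1 s (le_trans (le_max_right _ _) hs)]

lemma exists_req (r : List ℕ → ℕ) (hr : Computable r) :
    ∃ e h s0, ∀ s ≥ s0, HH s (e + 1) = (r h + 1) :: h := by
  obtain ⟨c, hc⟩ := Nat.Partrec.Code.exists_code.1 hr
  obtain ⟨h, s0, hs0⟩ := HH_lim (Encodable.encode c)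
  have hev : r h ∈ Nat.Partrec.Code.eval c (Encodable.encode h) := by
    rw [hc]; simp
  obtain ⟨s1, hs1⟩ := Nat.Partrec.Code.evaln_complete.1 hev
  refine ⟨Encodable.encode c, h, max s0 s1, fun s hs => ?_⟩
  simp only [HH]
  rw [hs0 s (le_trans (le_max_left _ _) hs)]
  have := Nat.Partrec.Code.evaln_mono (le_trans (le_max_right _ _) hs) hs1
  rw [vS, Denumerable.ofNat_encode, Option.mem_def.1 this]
  rfl

lemma primrec_WW : Primrec WW :=
  Primrec.list_foldr (h := fun _ p => 16 * (p.1 + 1) * p.2) Primrec.id (Primrec.const 1)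
    (Primrec.nat_mul.comp (Primrec.nat_mul.comp (Primrec.const 16)
      (Primrec.succ.comp (Primrec.fst.comp Primrec.snd))) (Primrec.snd.comp Primrec.snd))

lemma primrec_DD (k : ℕ) : Primrec (DD k) :=
  Primrec.ite (Primrec.eq.comp Primrec.id (Primrec.const 0)) (Primrec.const 0)
    (Primrec.ite (Primrec.eq.comp (Primrec.fst.comp (Primrec.unpair.comp Primrec.pred))
      (Primrec.const (k+1))) (Primrec.const 7) (Primrec.const 4))

lemma primrec_NN (k : ℕ) : Primrec (NN k) :=
  Primrec.list_foldr
    (h := fun _ p => 16 * (p.1 + 1) * p.2 + 2 * (p.1 + 1) * DD k p.1 + 1) Primrec.id (Primrec.const 0)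
    (Primrec.succ.comp (Primrec.nat_add.comp
      (Primrec.nat_mul.comp (Primrec.nat_mul.comp (Primrec.const 16)
        (Primrec.succ.comp (Primrec.fst.comp Primrec.snd))) (Primrec.snd.comp Primrec.snd))
      (Primrec.nat_mul.comp (Primrec.nat_mul.comp (Primrec.const 2)
        (Primrec.succ.comp (Primrec.fst.comp Primrec.snd)))
        ((primrec_DD k).comp (Primrec.fst.comp Primrec.snd)))))

lemma primrec_vS : Primrec (fun p : (ℕ × ℕ) × List ℕ => vS p.1.1 p.1.2 p.2) := by
  refine Primrec.option_getD.comp (Primrec.option_map ?_ (Primrec.succ.comp Primrec.snd).to₂)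
    (Primrec.const 0)
  exact Nat.Partrec.Code.primrec_evaln.comp
    (((Primrec.fst.comp Primrec.fst).pair
      ((Primrec.ofNat Code).comp (Primrec.snd.comp Primrec.fst))).pair
      (Primrec.encode.comp Primrec.snd))

lemma HH_rec (s e : ℕ) : HH s e = Nat.rec [] (fun e h => vS s e h :: h) e := by
  induction e with
  | zero => rfl
  | succ e ih => simp only [HH]; rw [ih]

lemma primrec_HH : Primrec (fun s => HH s s) := by
  have := Primrec.nat_rec' (α := ℕ) (f := fun s => s) (g := fun _ => ([] : List ℕ))
    (h := fun s p => vS s p.1 p.2 :: p.2) Primrec.id (Primrec.const [])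
    (Primrec.list_cons.comp
      (primrec_vS.comp ((Primrec.fst.pair (Primrec.fst.comp Primrec.snd)).pair
        (Primrec.snd.comp Primrec.snd))) (Primrec.snd.comp Primrec.snd))
  exact this.of_eq fun s => (HH_rec s s).symm

/-- computability of quotients of naturals -/
lemma computable_quot {α : Type*} [Primcodable α] {n d : α → ℕ} (hn : Primrec n) (hd : Primrec d)
    (hpos : ∀ a, 0 < d a) : Computable (fun a => (n a : ℚ) / d a) := by
  refine (computable_mk.comp (Primrec.pair hn (Primrec.pair (Primrec.const 0)
    (Primrec.pred.comp hd))).to_comp).of_eq fun a => ?_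
  have : (d a).pred + 1 = d a := Nat.succ_pred_eq_of_pos (hpos a)
  have h2 : ((d a).pred : ℚ) + 1 = d a := by exact_mod_cast this
  simp only [mk, h2]
  simp

lemma computable_aa (k : ℕ) : Computable (aa k) :=
  computable_quot ((primrec_NN k).comp primrec_HH) (primrec_WW.comp primrec_HH) fun _ => WW_pos _

lemma construction : ∃ α : ℕ → ℝ, (∀ k, LeftCE (α k)) ∧ ∀ r : List ℕ → ℕ, Computable r →
    ∃ h, ∀ k, (lo k ((r h + 1) :: h) : ℝ) ≤ α k ∧ α k ≤ (hi k ((r h + 1) :: h) : ℝ) := by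
  have hm : ∀ k, Monotone fun n => (aa k n : ℝ) := fun k s t hst => by
    simp only
    exact_mod_cast aa_mono k hst
  have hb : ∀ k, BddAbove (Set.range fun n => (aa k n : ℝ)) := fun k =>
    ⟨1, by rintro _ ⟨n, rfl⟩; simp only; exact_mod_cast aa_le_one k n⟩
  have ht := fun k => tendsto_atTop_ciSup (hm k) (hb k)
  refine ⟨fun k => ⨆ n, (aa k n : ℝ), fun k => ⟨aa k, computable_aa k, aa_mono k, ht k⟩, ?_⟩
  intro r hr
  obtain ⟨e, h, s0, hs⟩ := exists_req r hr
  refine ⟨h, fun k => ⟨?_, ?_⟩⟩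
  · refine ge_of_tendsto (ht k) (Filter.eventually_atTop.2 ⟨max s0 (e + 1), fun s hs' => ?_⟩)
    rw [← hs s (le_trans (le_max_left _ _) hs')]
    exact_mod_cast lo_mono_len k s (le_trans (le_max_right _ _) hs')
  · refine le_of_tendsto (ht k) (Filter.eventually_atTop.2 ⟨max s0 (e + 1), fun s hs' => ?_⟩)
    rw [← hs s (le_trans (le_max_left _ _) hs')]
    exact_mod_cast (lo_le_hi k _).trans (hi_anti_len k s (le_trans (le_max_right _ _) hs'))

lemma comp_lt {α : Type*} [Primcodable α] {a b : α → ℚ} (ha : Computable a) (hb : Computable b) :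
    Computable (fun x => decide (a x < b x)) :=
  Computable.comp (f := fun p : ℚ × ℚ => decide (p.1 < p.2)) (g := fun x => (a x, b x))
    computable_lt (ha.pair hb)

lemma comp_sub {α : Type*} [Primcodable α] {a b : α → ℚ} (ha : Computable a) (hb : Computable b) :
    Computable (fun x => a x - b x) :=
  Computable.comp (f := fun p : ℚ × ℚ => p.1 - p.2) (g := fun x => (a x, b x))
    computable_sub (ha.pair hb)

lemma comp_or {α : Type*} [Primcodable α] {a b : α → Bool} (ha : Computable a) (hb : Computable b) :
    Computable (fun x => a x || b x) :=
  Primrec.or.to_comp.comp ha hb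

lemma comp_neg {α : Type*} [Primcodable α] {a : α → Bool} (ha : Computable a) :
    Computable (fun x => !a x) :=
  Primrec.not.to_comp.comp ha

lemma comp_pair {α : Type*} [Primcodable α] {a b : α → ℕ} (ha : Computable a) (hb : Computable b) :
    Computable (fun x => Nat.pair (a x) (b x)) :=
  Primrec₂.natPair.to_comp.comp ha hb

def Gen (α : ℕ → ℝ) : Prop := ∀ r : List ℕ → ℕ, Computable r →
    ∃ h, ∀ k, (lo k ((r h + 1) :: h) : ℝ) ≤ α k ∧ α k ≤ (hi k ((r h + 1) :: h) : ℝ)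

def qq (j : ℕ) (h : List ℕ) : ℚ := ((2 * NN j h + 1 : ℕ) : ℚ) / (2 * WW h : ℕ)
def th (i : ℕ) (h : List ℕ) : ℚ := ((8 * NN i h + 6 : ℕ) : ℚ) / (8 * WW h : ℕ)

lemma computable_qq (j : ℕ) : Computable (qq j) :=
  computable_quot (Primrec.succ.comp (Primrec.nat_mul.comp (Primrec.const 2) (primrec_NN j)))
    (Primrec.nat_mul.comp (Primrec.const 2) primrec_WW)
    fun h => Nat.mul_pos (by norm_num) (WW_pos h)

lemma computable_th (j : ℕ) : Computable (th j) :=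
  computable_quot (Primrec.nat_add.comp (Primrec.nat_mul.comp (Primrec.const 8) (primrec_NN j))
    (Primrec.const 6))
    (Primrec.nat_mul.comp (Primrec.const 8) primrec_WW)
    fun h => Nat.mul_pos (by norm_num) (WW_pos h)

lemma qq_eq (j : ℕ) (h : List ℕ) : qq j h = lo j h + (1 / 2) * (1 / WW h) := by
  have := WW_pos h
  have h1 : (WW h : ℚ) ≠ 0 := by positivity
  simp only [qq, lo]; push_cast; field_simp

lemma th_eq (j : ℕ) (h : List ℕ) : th j h = lo j h + (3 / 4) * (1 / WW h) := by
  have := WW_pos h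
  have h1 : (WW h : ℚ) ≠ 0 := by positivity
  simp only [th, lo]; push_cast; field_simp; ring

/-- Real form of genericity. -/
lemma gen_real {α : ℕ → ℝ} (hα : Gen α) (r : List ℕ → ℕ) (hr : Computable r) :
    ∃ h, ∃ u ε : ℝ, 0 < u ∧ u ≤ 1 ∧ 0 < ε ∧ 16 * (r h + 2) * ε = 1 ∧
      (∀ k, (qq k h : ℝ) = lo k h + u / 2) ∧ (∀ k, (th k h : ℝ) = lo k h + 3 / 4 * u) ∧
      ∀ k, lo k h + (DD k (r h + 1) / 8 + ε) * u ≤ α k ∧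
        α k ≤ lo k h + (DD k (r h + 1) / 8 + 2 * ε) * u := by
  obtain ⟨h, hh⟩ := hα r hr
  have hW := WW_pos h
  have hW1 : (1 : ℝ) ≤ WW h := by exact_mod_cast hW
  refine ⟨h, 1 / WW h, 1 / (16 * (r h + 2)), by positivity, ?_, by positivity, ?_, ?_, ?_, ?_⟩
  · rw [div_le_one (by positivity)]; exact hW1
  · field_simp
  · intro k; rw [qq_eq]; push_cast; ring
  · intro k; rw [th_eq]; push_cast; ring
  · intro k
    have := hh k
    rw [lo_cons, hi_cons] at this
    push_cast at this
    have e1 : (r h : ℝ) + 1 + 1 = r h + 2 := by ring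
    rw [e1] at this
    constructor
    · refine le_trans (le_of_eq ?_) this.1
      ring
    · refine le_trans this.2 (le_of_eq ?_)
      ring

lemma pair_not {α : ℕ → ℝ} (hα : Gen α) {i j : ℕ} (hij : i ≠ j) :
    ¬ TotalSolovayReducible (α i) (α j) := by
  rintro ⟨c, hc, f, hf, hcf⟩
  obtain ⟨C, hC⟩ := exists_nat_ge c
  have hCr : (c : ℝ) ≤ C := by exact_mod_cast hC
  let r : List ℕ → ℕ := fun h => Nat.pair (bif decide (f (qq j h) < th i h) then i + 1 else 0) C
  have hr : Computable r := by
    have h0 : Computable (fun h => f (qq j h)) := hf.comp (computable_qq j)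
    have h1 : Computable (fun h => decide (f (qq j h) < th i h)) := comp_lt h0 (computable_th i)
    exact comp_pair (Computable.cond h1 (Computable.const _) (Computable.const _))
      (Computable.const _)
  obtain ⟨h, u, ε, hu, hu1, hε, hεr, hq, ht, hk⟩ := gen_real hα r hr
  have hrC : (C : ℝ) ≤ r h := by exact_mod_cast Nat.right_le_pair _ _
  have hC0 : (0 : ℝ) ≤ C := by positivity
  have hCε : C * (2 * ε) ≤ 1 / 8 := by nlinarith
  have hε8 : 2 * ε ≤ 1 / 8 := by nlinarith
  have hru : (r h).unpair.1 = bif decide (f (qq j h) < th i h) then i + 1 else 0 := by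
    simp only [r, Nat.unpair_pair]
  have hDj : DD j (r h + 1) = 4 := by
    unfold DD
    rw [if_neg (by omega), Nat.add_sub_cancel, hru, if_neg]
    cases decide (f (qq j h) < th i h) <;> simp <;> omega
  have hj := hk j
  rw [hDj] at hj
  have hqj := hq j
  have hlt : (qq j h : ℝ) < α j := by
    have : 0 < ε * u := by positivity
    push_cast at hj
    linarith [hj.1]
  obtain ⟨h1, h2⟩ := hcf _ hlt
  have hi := hk i
  have hti := ht i
  by_cases hd : f (qq j h) < th i h
  · have hDi : DD i (r h + 1) = 7 := by
      unfold DD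
      rw [if_neg (by omega), Nat.add_sub_cancel, hru, if_pos]
      simp [hd]
    rw [hDi] at hi
    have hd' : (f (qq j h) : ℝ) < th i h := by exact_mod_cast hd
    push_cast at hi hj
    have a1 : α j - qq j h ≤ 2 * ε * u := by linarith [hj.2]
    have a2 : (c : ℝ) * (α j - qq j h) ≤ C * (2 * ε * u) :=
      mul_le_mul hCr a1 (by linarith) hC0
    have a3 : (C : ℝ) * (2 * ε * u) ≤ 1 / 8 * u := by
      have := mul_le_mul_of_nonneg_right hCε hu.le
      linarith
    have : 0 < ε * u := by positivity
    linarith [hi.1]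
  · have hDi : DD i (r h + 1) = 4 := by
      unfold DD
      rw [if_neg (by omega), Nat.add_sub_cancel, hru, if_neg]
      simp [hd]
    rw [hDi] at hi
    have hd' : (th i h : ℝ) ≤ f (qq j h) := by exact_mod_cast not_lt.1 hd
    push_cast at hi
    have := mul_le_mul_of_nonneg_right hε8 hu.le
    linarith [hi.2]

lemma no_speed {α : ℕ → ℝ} (hα : Gen α) (j : ℕ) {γ : ℝ} (c : ℚ) (C : ℕ) (hC : c ≤ C)
    (f : ℚ → ℚ) 
    (hcf : ∀ q : ℚ, (q : ℝ) < α j → (f q : ℝ) < γ ∧ γ - (f q : ℝ) < (c : ℝ) * (α j - (q : ℝ)))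
    (g : ℚ → ℕ) (hg : Computable g)
    (hfg : ∀ q, (f q : ℝ) < γ → (C : ℝ) ≤ (γ - f q) * (g q + 1)) : False := by
  have hCr : (c : ℝ) ≤ C := by exact_mod_cast hC
  let r : List ℕ → ℕ := fun h => Nat.pair 0 (g (qq j h))
  have hr : Computable r :=
    comp_pair (Computable.const _) (hg.comp (computable_qq j))
  obtain ⟨h, u, ε, hu, hu1, hε, hεr, hq, ht, hk⟩ := gen_real hα r hr
  have hrC : (g (qq j h) : ℝ) ≤ r h := by exact_mod_cast Nat.right_le_pair _ _
  have hC0 : (0 : ℝ) ≤ C := by positivity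
  have hDj : DD j (r h + 1) = 4 := by
    unfold DD
    rw [if_neg (by omega), Nat.add_sub_cancel, if_neg]
    simp [r]
  have hj := hk j
  rw [hDj] at hj
  push_cast at hj
  have hqj := hq j
  have hlt : (qq j h : ℝ) < α j := by
    have : 0 < ε * u := by positivity
    linarith [hj.1]
  obtain ⟨h1, h2⟩ := hcf _ hlt
  have h3 := hfg _ h1
  have a1 : α j - qq j h ≤ 2 * ε * u := by linarith [hj.2]
  have a2 : (c : ℝ) * (α j - qq j h) ≤ C * (2 * ε * u) :=
    mul_le_mul hCr a1 (by linarith) hC0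
  have a3 : (C : ℝ) * (2 * ε * u) ≤ C * (2 * ε) := by
    have : 2 * ε * u ≤ 2 * ε := by nlinarith
    exact mul_le_mul_of_nonneg_left this hC0
  have hpos : 0 < γ - f (qq j h) := by linarith
  have a4 : (C : ℝ) * (2 * ε) ≤ (γ - f (qq j h)) * (r h + 1) * (2 * ε) := by
    apply mul_le_mul_of_nonneg_right _ (by positivity)
    exact h3.trans (mul_le_mul_of_nonneg_left (by linarith) hpos.le)
  have a5 : ((r h : ℝ) + 1) * (2 * ε) ≤ 1 := by nlinarith
  have a6 := mul_le_mul_of_nonneg_left a5 hpos.le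
  linarith

lemma two_pow_le (m : ℕ) : (2 : ℝ)⁻¹ ^ m ≤ 1 / (m + 1) := by
  rw [inv_pow, ← one_div]
  have : (m : ℝ) + 1 ≤ 2 ^ m := by exact_mod_cast Nat.lt_two_pow_self
  exact one_div_le_one_div_of_le (by positivity) this

lemma computable_inv (K : ℕ) : Computable (fun m : ℕ => (K : ℚ) / (m + 1)) :=
  (computable_quot (Primrec.const K) Primrec.succ (fun _ => Nat.succ_pos _)).of_eq fun m => by
    push_cast; rfl

lemma computable_test (K : ℕ) (s : ℕ → ℚ) (hs : Computable s) (f : ℚ → ℚ) (hf : Computable f) :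
    Computable (fun p : ℚ × ℕ => decide ((K : ℚ) / (p.2 + 1) < s p.2 - f p.1)) := by
  have h1 : Computable (fun p : ℚ × ℕ => (K : ℚ) / (p.2 + 1)) :=
    Computable.comp (f := fun m : ℕ => (K : ℚ) / (m + 1)) (g := Prod.snd) (computable_inv K) Computable.snd
  have h2 : Computable (fun p : ℚ × ℕ => s p.2) := hs.comp Computable.snd
  have h3 : Computable (fun p : ℚ × ℕ => f p.1) := hf.comp Computable.fst
  exact comp_lt h1 (comp_sub h2 h3)

lemma computable_test' (K : ℕ) (s : ℕ → ℚ) (hs : Computable s) (f : ℚ → ℚ) (hf : Computable f) :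
    Computable (fun p : ℚ × ℕ => decide ((K : ℚ) / (p.2 + 1) < f p.1 - s p.2)) := by
  have h1 : Computable (fun p : ℚ × ℕ => (K : ℚ) / (p.2 + 1)) :=
    Computable.comp (f := fun m : ℕ => (K : ℚ) / (m + 1)) (g := Prod.snd) (computable_inv K) Computable.snd
  have h2 : Computable (fun p : ℚ × ℕ => s p.2) := hs.comp Computable.snd
  have h3 : Computable (fun p : ℚ × ℕ => f p.1) := hf.comp Computable.fst
  exact comp_lt h1 (comp_sub h3 h2)

lemma exists_m (γ x : ℝ) (s : ℕ → ℚ) (hs : ∀ n, |γ - (s n : ℝ)| ≤ (2 : ℝ)⁻¹ ^ n) (K : ℕ)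
    (hx : x < γ) : ∃ m : ℕ, (K : ℝ) / (m + 1) < s m - x := by
  obtain ⟨m, hm⟩ := exists_nat_gt (((K : ℝ) + 1) / (γ - x))
  have h0 : 0 < γ - x := by linarith
  rw [div_lt_iff₀ h0] at hm
  have h1 := (abs_le.1 ((hs m).trans (two_pow_le m))).2
  refine ⟨m, ?_⟩
  have h2 : ((K : ℝ) + 1) / (m + 1) < γ - x := by
    rw [div_lt_iff₀ (by positivity)]; nlinarith
  rw [add_div] at h2
  linarith

lemma exists_m' (γ x : ℝ) (s : ℕ → ℚ) (hs : ∀ n, |γ - (s n : ℝ)| ≤ (2 : ℝ)⁻¹ ^ n) (K : ℕ)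
    (hx : γ < x) : ∃ m : ℕ, (K : ℝ) / (m + 1) < x - s m := by
  obtain ⟨m, hm⟩ := exists_m (-γ) (-x) (fun n => - s n) (fun n => by
    have := hs n
    rw [← abs_neg] at this
    push_cast
    convert this using 2
    ring) K (by linarith)
  refine ⟨m, ?_⟩
  push_cast at hm
  linarith

lemma cast_test (K m : ℕ) (x y : ℚ) :
    (K : ℚ) / (m + 1) < x - y ↔ (K : ℝ) / (m + 1) < (x : ℝ) - y := by
  rw [← Rat.cast_lt (K := ℝ)]
  push_cast
  rfl

lemma comp_not {α : ℕ → ℝ} (hα : Gen α) (j : ℕ) {γ : ℝ} (hγ : ComputableReal γ) :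
    ¬ TotalSolovayReducible γ (α j) := by
  rintro ⟨c, hc, f, hf, hcf⟩
  obtain ⟨s, hs, hsγ⟩ := hγ
  obtain ⟨C, hC⟩ := exists_nat_ge c
  -- the basic search
  have key : ∀ (q : ℚ) (m : ℕ), ((C + 1 : ℕ) : ℚ) / (m + 1) < s m - f q →
      (C : ℝ) ≤ (γ - f q) * (m + 1) := by
    intro q m h
    have h' : ((C + 1 : ℕ) : ℝ) / (m + 1) < s m - f q := (cast_test _ _ _ _).1 h
    push_cast at h'
    rw [add_div] at h'
    have h1 := (abs_le.1 ((hsγ m).trans (two_pow_le m))).1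
    rw [← div_le_iff₀ (by positivity)]
    linarith
  by_cases hrat : ∃ g : ℚ, (g : ℝ) = γ
  · obtain ⟨g, hg⟩ := hrat
    obtain ⟨G, hG, hG'⟩ := exists_find (α := ℚ)
      (fun q m => decide (((C + 1 : ℕ) : ℚ) / (m + 1) < s m - f q) || !(decide (f q < g))) (by
        have h3 : Computable (fun p : ℚ × ℕ => f p.1) := hf.comp Computable.fst
        exact Computable.to₂ (comp_or (computable_test (C + 1) s hs f hf)
          (comp_neg (comp_lt h3 (Computable.const g)))))
      (by
        intro q
        by_cases hq : f q < g
        · obtain ⟨m, hm⟩ := exists_m γ (f q) s hsγ (C + 1) (by rw [← hg]; exact_mod_cast hq)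
          refine ⟨m, ?_⟩
          have : ((C + 1 : ℕ) : ℚ) / (m + 1) < s m - f q := (cast_test _ _ _ _).2 hm
          rw [decide_eq_true this]; rfl
        · exact ⟨0, by rw [decide_eq_false hq]; simp⟩)
    refine no_speed hα j c C hC f hcf G hG fun q hq => ?_
    have h1 := hG' q
    have h2 : f q < g := by rw [← hg] at hq; exact_mod_cast hq
    rw [decide_eq_true h2, Bool.not_true, Bool.or_false] at h1
    exact key q _ (of_decide_eq_true h1)
  · push Not at hrat
    obtain ⟨G, hG, hG'⟩ := exists_find (α := ℚ)
      (fun q m => decide (((C + 1 : ℕ) : ℚ) / (m + 1) < s m - f q) ||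
        decide (((1 : ℕ) : ℚ) / (m + 1) < f q - s m)) (by
        exact Computable.to₂ (comp_or (computable_test (C + 1) s hs f hf)
          (computable_test' 1 s hs f hf)))
      (by
        intro q
        rcases lt_or_gt_of_ne (hrat (f q)) with hq | hq
        · obtain ⟨m, hm⟩ := exists_m γ (f q) s hsγ (C + 1) hq
          refine ⟨m, ?_⟩
          have : ((C + 1 : ℕ) : ℚ) / (m + 1) < s m - f q := (cast_test _ _ _ _).2 hm
          rw [decide_eq_true this]; rfl
        · obtain ⟨m, hm⟩ := exists_m' γ (f q) s hsγ 1 hq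
          refine ⟨m, ?_⟩
          have : ((1 : ℕ) : ℚ) / (m + 1) < f q - s m := (cast_test _ _ _ _).2 hm
          rw [decide_eq_true this, Bool.or_true])
    refine no_speed hα j c C hC f hcf G hG fun q hq => ?_
    have h1 := hG' q
    rw [Bool.or_eq_true] at h1
    rcases h1 with h1 | h1
    · exact key q _ (of_decide_eq_true h1)
    · exfalso
      have h2 := of_decide_eq_true h1
      have h2' : ((1 : ℕ) : ℝ) / (G q + 1) < f q - s (G q) := (cast_test _ _ _ _).1 h2
      push_cast at h2'
      have h3 := (abs_le.1 ((hsγ (G q)).trans (two_pow_le (G q)))).2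
      linarith

lemma computable_of_le {α γ : ℝ} (hγ : ComputableReal γ) (h : TotalSolovayReducible α γ) :
    ComputableReal α := by
  obtain ⟨s, hs, hsγ⟩ := hγ
  obtain ⟨c, hc, f, hf, hcf⟩ := h
  obtain ⟨k, hk⟩ := pow_unbounded_of_one_lt (3 * (c : ℝ)) (one_lt_two)
  have hp : Primrec (fun n : ℕ => 2 ^ (n + k)) :=
    (Primrec₂.unpaired'.1 Nat.Primrec.pow).comp (Primrec.const 2)
      (Primrec.nat_add.comp Primrec.id (Primrec.const k))
  let t : ℕ → ℚ := fun n => s (n + k) - ((2 : ℕ) : ℚ) / ((2 ^ (n + k) : ℕ) : ℚ)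
  have ht : Computable t := by
    have h0 : Primrec (fun n : ℕ => n + k) := Primrec.nat_add.comp Primrec.id (Primrec.const k)
    have h1 : Computable (fun n : ℕ => s (n + k)) := hs.comp h0.to_comp
    exact comp_sub h1 (computable_quot (Primrec.const 2) hp (fun _ => by positivity))
  refine ⟨fun n => f (t n), hf.comp ht, fun n => ?_⟩
  have htn : (t n : ℝ) = s (n + k) - 2 * (2 : ℝ)⁻¹ ^ (n + k) := by
    simp only [t]; push_cast; rw [inv_pow]; rfl
  have h1 := abs_le.1 (hsγ (n + k))
  have hpos : (0 : ℝ) < (2 : ℝ)⁻¹ ^ (n + k) := by positivity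
  obtain ⟨h2, h3⟩ := hcf (t n) (by rw [htn]; linarith [h1.1])
  have hcpos : (0 : ℝ) < c := by exact_mod_cast hc
  have h4 : (c : ℝ) * (γ - t n) ≤ c * (3 * (2 : ℝ)⁻¹ ^ (n + k)) := by
    apply mul_le_mul_of_nonneg_left _ hcpos.le
    rw [htn]; linarith [h1.2]
  have h5 : (c : ℝ) * (3 * (2 : ℝ)⁻¹ ^ (n + k)) ≤ (2 : ℝ)⁻¹ ^ n := by
    have e : (2 : ℝ) ^ k * (2 : ℝ)⁻¹ ^ k = 1 := by rw [← mul_pow]; norm_num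
    calc (c : ℝ) * (3 * (2 : ℝ)⁻¹ ^ (n + k)) = (3 * c) * ((2 : ℝ)⁻¹ ^ k * (2 : ℝ)⁻¹ ^ n) := by
          rw [pow_add]; ring
      _ ≤ 2 ^ k * ((2 : ℝ)⁻¹ ^ k * (2 : ℝ)⁻¹ ^ n) :=
          mul_le_mul_of_nonneg_right hk.le (by positivity)
      _ = (2 : ℝ)⁻¹ ^ n := by rw [← mul_assoc, e, one_mul]
  rw [abs_of_nonneg (by linarith)]
  linarith

lemma not_comp {α : ℕ → ℝ} (hα : Gen α) (j : ℕ) {γ : ℝ} (hγ : ComputableReal γ) :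
    ¬ TotalSolovayReducible (α j) γ := by
  intro h
  refine comp_not hα j (computable_of_le hγ h) ⟨2, by norm_num, id, Computable.id, fun q hq => ?_⟩
  refine ⟨hq, ?_⟩
  push_cast
  simp only [id]
  linarith

end TSA

theorem exists_infinite_totalSolovay_antichain :
    ∃ α : ℕ → ℝ, (∀ i, LeftCE (α i)) ∧
      (∀ i j, i ≠ j →
        ¬ TotalSolovayReducible (α i) (α j) ∧ ¬ TotalSolovayReducible (α j) (α i)) ∧
      (∀ i, ∀ γ : ℝ, ComputableReal γ →
        ¬ TotalSolovayReducible (α i) γ ∧ ¬ TotalSolovayReducible γ (α i)) := by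
  obtain ⟨α, h1, h2⟩ := TSA.construction
  exact ⟨α, h1, fun i j hij => ⟨TSA.pair_not h2 hij, TSA.pair_not h2 hij.symm⟩,
    fun i γ hγ => ⟨TSA.not_comp h2 i hγ, TSA.comp_not h2 i hγ⟩⟩
end

section
/- There exist left-c.e. reals α and β such that α is not total-Solovay reducible to α + β; in particular, addition is not an upper bound operator for total Solovay reducibility on the left-c.e. reals. -/
def intCode : ℤ → ℕ
  | Int.ofNat n => 2 * n
  | Int.negSucc n => 2 * n + 1

theorem encode_int_eq (z : ℤ) : @Encodable.encode ℤ Int.encodable z = intCode z := by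
  cases z <;> rfl

def ratRaw (x : ℚ) : ℕ := Nat.pair (intCode x.num) x.den

/-- the code of a rational used by `Computable`. -/
def ratCode (x : ℚ) : ℕ := @Encodable.encode ℚ (Primcodable.ofDenumerable ℚ).toEncodable x

def InS (n : ℕ) : Prop := 0 < n.unpair.2 ∧ ∀ g < n.unpair.1 + n.unpair.2 + 2,
  2 ≤ g → ((n.unpair.1 + 1) / 2) % g = 0 → n.unpair.2 % g ≠ 0

instance : DecidablePred InS := fun n => by unfold InS; infer_instance

def cntS (n : ℕ) : ℕ := ((List.range n).filter (fun x => decide (InS x))).length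

theorem enc0 (x : ℚ) : @Encodable.encode ℚ Rat.instEncodable x = ratRaw x := by
  unfold ratRaw
  rw [← encode_int_eq]
  cases x; rfl

theorem inS_iff (n : ℕ) : InS n ↔
    0 < n.unpair.2 ∧ Nat.Coprime ((n.unpair.1 + 1) / 2) n.unpair.2 := by
  unfold InS
  refine and_congr_right fun hd => ?_
  constructor
  · intro h
    by_contra hc
    have hg : Nat.gcd ((n.unpair.1 + 1) / 2) n.unpair.2 ≠ 1 := hc
    have h1 := Nat.gcd_dvd_left ((n.unpair.1 + 1) / 2) n.unpair.2
    have h2 := Nat.gcd_dvd_right ((n.unpair.1 + 1) / 2) n.unpair.2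
    have h3 := Nat.le_of_dvd hd h2
    have h4 := Nat.pos_of_dvd_of_pos h2 hd
    exact h _ (by omega) (by omega) (Nat.mod_eq_zero_of_dvd h1) (Nat.mod_eq_zero_of_dvd h2)
  · intro h g _ hg h1 h2
    have := Nat.dvd_gcd (Nat.dvd_of_mod_eq_zero h1) (Nat.dvd_of_mod_eq_zero h2)
    rw [h] at this
    have := Nat.le_of_dvd one_pos this
    omega

theorem intCode_natAbs (z : ℤ) : (intCode z + 1) / 2 = z.natAbs := by
  cases z with
  | ofNat n => simp only [intCode, Int.ofNat_eq_natCast, Int.natAbs_natCast]; omega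
  | negSucc n => simp only [intCode, Int.natAbs_negSucc]; omega

theorem inS_range (n : ℕ) : InS n ↔ ∃ x : ℚ, ratRaw x = n := by
  rw [inS_iff]
  constructor
  · rintro ⟨hd, hc⟩
    obtain ⟨z, hz⟩ : ∃ z : ℤ, intCode z = n.unpair.1 := by
      rcases Nat.even_or_odd' (n.unpair.1) with ⟨k, hk | hk⟩
      · exact ⟨Int.ofNat k, hk.symm⟩
      · exact ⟨Int.negSucc k, hk.symm⟩
    rw [← hz, intCode_natAbs] at hc
    refine ⟨⟨z, n.unpair.2, hd.ne', hc⟩, ?_⟩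
    simp [ratRaw, hz]
  · rintro ⟨x, rfl⟩
    simp only [ratRaw, Nat.unpair_pair, intCode_natAbs]
    exact ⟨x.den_pos, x.reduced⟩

theorem ratCode_eq (x : ℚ) : ratCode x = cntS (ratRaw x) := by
  have h0 : ∃ (h : DecidablePred (· ∈ Set.range (@Encodable.encode ℚ Rat.instEncodable))),
      ratCode x = (List.range (@Encodable.encode ℚ Rat.instEncodable x)).countP
        (· ∈ Set.range (@Encodable.encode ℚ Rat.instEncodable)) :=
    ⟨@Encodable.decidableRangeEncode ℚ Rat.instEncodable, rfl⟩
  obtain ⟨h, e⟩ := h0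
  rw [e, enc0, List.countP_eq_length_filter, cntS]
  congr 2
  ext n
  simp only [decide_eq_decide]
  rw [inS_range]
  simp only [Set.mem_range, enc0]

theorem ratRaw_inj {x y : ℚ} (h : ratRaw x = ratRaw y) : x = y := by
  rw [← enc0, ← enc0] at h
  exact @Encodable.encode_injective ℚ Rat.instEncodable _ _ h

theorem ratCode_inj {x y : ℚ} (h : ratCode x = ratCode y) : x = y :=
  @Encodable.encode_injective ℚ (Primcodable.ofDenumerable ℚ).toEncodable _ _ h

section
open Primrec

theorem inS_prim : PrimrecPred InS := by
  unfold InS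
  have hR : PrimrecRel (fun (g : ℕ) (n : ℕ) =>
      2 ≤ g → ((n.unpair.1 + 1) / 2) % g = 0 → n.unpair.2 % g ≠ 0) := by
    have h1 : PrimrecPred (fun p : ℕ × ℕ => ¬ (2 ≤ p.1)) :=
      (nat_le.comp (const 2) fst).not
    have h2 : PrimrecPred (fun p : ℕ × ℕ => ¬ (((p.2.unpair.1 + 1) / 2) % p.1 = 0)) :=
      (Primrec.eq.comp (nat_mod.comp (nat_div.comp
        (succ.comp (fst.comp (unpair.comp snd))) (const 2)) fst) (const 0)).not
    have h3 : PrimrecPred (fun p : ℕ × ℕ => ¬ (p.2.unpair.2 % p.1 = 0)) :=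
      (Primrec.eq.comp (nat_mod.comp (snd.comp (unpair.comp snd)) fst) (const 0)).not
    refine (h1.or (h2.or h3)).of_eq ?_
    intro p
    tauto
  have hF := hR.forall_lt
  refine PrimrecPred.and (nat_lt.comp (const 0) (snd.comp unpair)) ?_
  exact hF.comp (nat_add.comp (nat_add.comp (fst.comp unpair) (snd.comp unpair)) (const 2)) Primrec.id

theorem cntS_prim : Primrec cntS :=
  Primrec.list_length.comp ((listFilter inS_prim).comp list_range)
end

theorem computable_of_unique {α : Type*} [Primcodable α] (P : α → ℕ → Prop) (g : α → ℕ)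
    (hP : PrimrecRel P) (hg : ∀ a, P a (g a)) (hu : ∀ a n, P a n → n = g a) : Computable g := by
  classical
  have h1 : Computable₂ (fun a n => decide (P a n)) := hP.decide.to_comp
  refine (Partrec.rfind h1.partrec₂).of_eq_tot ?_
  intro a
  rw [Nat.mem_rfind]
  constructor
  · simpa using hg a
  · intro m hm
    simp only [PFun.coe_val, Part.mem_some_iff]
    symm
    rw [decide_eq_false_iff_not]
    intro h
    exact hm.ne (hu a m h)

/-- decoding from codes to raw -/
def decRaw (n : ℕ) : ℕ := ratRaw (@Denumerable.ofNat ℚ Rat.instDenumerable n)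

theorem decRaw_code (x : ℚ) : decRaw (ratCode x) = ratRaw x := by
  unfold decRaw ratCode
  rw [Denumerable.ofNat_encode]

theorem decRaw_comp : Computable decRaw := by
  refine computable_of_unique (fun n r => InS r ∧ cntS r = n) decRaw ?_ ?_ ?_
  · exact (inS_prim.comp Primrec.snd).and
      (Primrec.eq.comp (cntS_prim.comp Primrec.snd) Primrec.fst)
  · intro n
    refine ⟨(inS_range _).2 ⟨_, rfl⟩, ?_⟩
    unfold decRaw
    rw [← ratCode_eq]
    exact Denumerable.encode_ofNat n
  · rintro n r ⟨h1, h2⟩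
    obtain ⟨x, rfl⟩ := (inS_range _).1 h1
    rw [← h2, ← ratCode_eq, decRaw_code]

def mkq (p : ℕ × ℕ) : ℚ := (p.1 : ℚ) / (p.2 : ℚ)

theorem raw_nonneg {x : ℚ} (h : (ratRaw x).unpair.1 % 2 = 0) :
    x = ((((ratRaw x).unpair.1 / 2 : ℕ) : ℚ)) / (((ratRaw x).unpair.2 : ℕ) : ℚ) := by
  unfold ratRaw at h ⊢
  rw [Nat.unpair_pair] at h ⊢
  dsimp only at h ⊢
  conv_lhs => rw [← Rat.num_div_den x]
  congr 1
  cases hz : x.num with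
  | ofNat n => simp [intCode]
  | negSucc n => rw [hz] at h; simp only [intCode] at h; omega

theorem raw_neg {x : ℚ} (h : ¬ (ratRaw x).unpair.1 % 2 = 0) : x < 0 := by
  unfold ratRaw at h
  rw [Nat.unpair_pair] at h
  dsimp only at h
  rw [← Rat.num_neg]
  cases hz : x.num with
  | ofNat n => rw [hz] at h; simp only [intCode] at h; omega
  | negSucc n => exact Int.negSucc_lt_zero n

theorem raw_den (x : ℚ) : 0 < (ratRaw x).unpair.2 := by
  simp only [ratRaw, Nat.unpair_pair]; exact x.den_pos

theorem mkq_comp : Computable (fun p : ℕ × ℕ => mkq (p.1, p.2 + 1)) := by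
  have hraw : Computable (fun p : ℕ × ℕ => ratRaw (mkq (p.1, p.2 + 1))) := by
    refine computable_of_unique (fun p r => InS r ∧ r.unpair.1 % 2 = 0 ∧
      r.unpair.1 / 2 * (p.2 + 1) = p.1 * r.unpair.2) _ ?_ ?_ ?_
    · have hu : Primrec (fun a : (ℕ × ℕ) × ℕ => a.2.unpair) := Primrec.unpair.comp Primrec.snd
      refine (inS_prim.comp Primrec.snd).and (.and ?_ ?_)
      · exact Primrec.eq.comp (Primrec.nat_mod.comp (Primrec.fst.comp hu) (.const 2)) (.const 0)
      · exact Primrec.eq.comp (Primrec.nat_mul.comp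
          (Primrec.nat_div.comp (Primrec.fst.comp hu) (.const 2))
          (Primrec.succ.comp (Primrec.snd.comp Primrec.fst)))
          (Primrec.nat_mul.comp (Primrec.fst.comp Primrec.fst) (Primrec.snd.comp hu))
    · intro p
      have hnn : 0 ≤ mkq (p.1, p.2 + 1) := by unfold mkq; positivity
      have he : (ratRaw (mkq (p.1, p.2 + 1))).unpair.1 % 2 = 0 := by
        by_contra h
        exact absurd (raw_neg h) (not_lt.2 hnn)
      refine ⟨(inS_range _).2 ⟨_, rfl⟩, he, ?_⟩
      have h1 := raw_nonneg he
      have h2 := raw_den (mkq (p.1, p.2 + 1))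
      set r := ratRaw (mkq (p.1, p.2 + 1))
      unfold mkq at h1
      have h3 : ((r.unpair.2 : ℕ) : ℚ) ≠ 0 := by exact_mod_cast h2.ne'
      have h4 : (((p.2 + 1 : ℕ)) : ℚ) ≠ 0 := by positivity
      rw [div_eq_div_iff h4 h3] at h1
      exact_mod_cast h1.symm
    · rintro p r ⟨h1, h2, h3⟩
      obtain ⟨x, rfl⟩ := (inS_range _).1 h1
      congr 1
      rw [raw_nonneg h2]
      have h4 := raw_den x
      unfold mkq
      have h3' : (((ratRaw x).unpair.2 : ℕ) : ℚ) ≠ 0 := by exact_mod_cast h4.ne'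
      have h4' : (((p.2 + 1 : ℕ)) : ℚ) ≠ 0 := by positivity
      rw [div_eq_div_iff h3' h4']
      exact_mod_cast h3
  refine Computable.encode_iff.1 ?_
  exact (cntS_prim.to_comp.comp hraw).of_eq fun p => (ratCode_eq _).symm

/-- comparison `x < a / d` given the raw form of `x`. -/
def ltRaw (r : ℕ) (a d : ℕ) : Bool :=
  decide (¬ (r.unpair.1 % 2 = 0) ∨ r.unpair.1 / 2 * d < a * r.unpair.2)

theorem ltRaw_iff (x : ℚ) (a d : ℕ) (hd : 0 < d) :
    ltRaw (ratRaw x) a d = true ↔ x < (a : ℚ) / d := by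
  unfold ltRaw
  rw [decide_eq_true_iff]
  by_cases h : (ratRaw x).unpair.1 % 2 = 0
  · simp only [h, not_true_eq_false, false_or]
    have h4 := raw_den x
    conv_rhs => rw [raw_nonneg h]
    rw [div_lt_div_iff₀ (by exact_mod_cast h4) (by exact_mod_cast hd)]
    exact_mod_cast Iff.rfl
  · simp only [h, not_false_eq_true, true_or, true_iff]
    exact lt_of_lt_of_le (raw_neg h) (by positivity)

theorem ltRaw_prim : Primrec (fun p : ℕ × ℕ × ℕ => ltRaw p.1 p.2.1 p.2.2) := by
  have hu : Primrec (fun p : ℕ × ℕ × ℕ => p.1.unpair) := Primrec.unpair.comp Primrec.fst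
  refine PrimrecPred.decide (p := fun p : ℕ × ℕ × ℕ => ¬ (p.1.unpair.1 % 2 = 0) ∨
    p.1.unpair.1 / 2 * p.2.2 < p.2.1 * p.1.unpair.2) (.or (.not ?_) ?_)
  · exact Primrec.eq.comp (Primrec.nat_mod.comp (Primrec.fst.comp hu) (.const 2)) (.const 0)
  · exact Primrec.nat_lt.comp (Primrec.nat_mul.comp
      (Primrec.nat_div.comp (Primrec.fst.comp hu) (.const 2))
      (Primrec.snd.comp Primrec.snd))
      (Primrec.nat_mul.comp (Primrec.fst.comp Primrec.snd) (Primrec.snd.comp hu))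

open Nat.Partrec (Code)

def qOf (st : ℕ × ℕ × ℕ) : ℚ := mkq (2 * (st.1 + st.2.1) + 1, (2 * st.2.2 - 1) + 1)

def outc (s e : ℕ) (st : ℕ × ℕ × ℕ) : Option Bool :=
  (Code.evaln s (Denumerable.ofNat Code e.unpair.1) (ratCode (qOf st))).map
    (fun n => ltRaw (decRaw n) (4 * st.1 + 1) (4 * st.2.2))

def nextSt (e : ℕ) (st : ℕ × ℕ × ℕ) (o : Option Bool) : ℕ × ℕ × ℕ :=
  Option.casesOn o
    (st.1 * (12 * (e + 1)), st.2.1 * (12 * (e + 1)), st.2.2 * (12 * (e + 1)))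
    (fun b => cond b
      (st.1 * (12 * (e + 1)) + 6 * (e + 1), st.2.1 * (12 * (e + 1)) + 1, st.2.2 * (12 * (e + 1)))
      (st.1 * (12 * (e + 1)) + 1, st.2.1 * (12 * (e + 1)) + 6 * (e + 1), st.2.2 * (12 * (e + 1))))

def St (s : ℕ) (e : ℕ) : ℕ × ℕ × ℕ :=
  Nat.rec (0, 0, 1) (fun e st => nextSt e st (outc s e st)) e

theorem St_succ (s e : ℕ) : St s (e + 1) = nextSt e (St s e) (outc s e (St s e)) := rfl

section comp
open Computable

theorem mul_c {α : Type*} [Primcodable α] {f g : α → ℕ} (hf : Computable f) (hg : Computable g) :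
    Computable (fun a => f a * g a) := (Primrec.nat_mul.to_comp).comp hf hg

theorem add_c {α : Type*} [Primcodable α] {f g : α → ℕ} (hf : Computable f) (hg : Computable g) :
    Computable (fun a => f a + g a) := (Primrec.nat_add.to_comp).comp hf hg

theorem sub_c {α : Type*} [Primcodable α] {f g : α → ℕ} (hf : Computable f) (hg : Computable g) :
    Computable (fun a => f a - g a) := (Primrec.nat_sub.to_comp).comp hf hg

theorem qOf_comp : Computable qOf := by
  have h : Computable (fun st : ℕ × ℕ × ℕ => (2 * (st.1 + st.2.1) + 1, 2 * st.2.2 - 1)) :=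
    .pair (add_c (mul_c (.const 2) (add_c fst (fst.comp snd))) (.const 1))
      (sub_c (mul_c (.const 2) (snd.comp snd)) (.const 1))
  have h2 := mkq_comp.comp h
  exact h2

theorem ratCode_comp : Computable ratCode := Computable.encode

theorem evaln_comp {α : Type*} [Primcodable α] {f : α → ℕ} {c : α → Code} {g : α → ℕ}
    (hf : Computable f) (hc : Computable c) (hg : Computable g) :
    Computable (fun a => Code.evaln (f a) (c a) (g a)) :=
  (Code.primrec_evaln.to_comp).comp ((hf.pair hc).pair hg)

theorem outc_comp : Computable (fun p : ℕ × ℕ × (ℕ × ℕ × ℕ) => outc p.1 p.2.1 p.2.2) := by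
  have hcode : Computable (fun p : ℕ × ℕ × (ℕ × ℕ × ℕ) =>
      Denumerable.ofNat Code p.2.1.unpair.1) :=
    (Computable.ofNat Code).comp (fst.comp (Computable.unpair.comp (fst.comp snd)))
  have hq : Computable (fun p : ℕ × ℕ × (ℕ × ℕ × ℕ) => ratCode (qOf p.2.2)) :=
    ratCode_comp.comp (qOf_comp.comp (snd.comp snd))
  have hev : Computable (fun p : ℕ × ℕ × (ℕ × ℕ × ℕ) =>
      Code.evaln p.1 (Denumerable.ofNat Code p.2.1.unpair.1) (ratCode (qOf p.2.2))) :=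
    evaln_comp fst hcode hq
  have h3 : Computable (fun p : (ℕ × ℕ × (ℕ × ℕ × ℕ)) × ℕ =>
      ltRaw (decRaw p.2) (4 * p.1.2.2.1 + 1) (4 * p.1.2.2.2.2)) := by
    have h1 : Computable (fun p : (ℕ × ℕ × (ℕ × ℕ × ℕ)) × ℕ => 4 * p.1.2.2.1 + 1) :=
      add_c (mul_c (.const 4) (fst.comp (snd.comp (snd.comp fst)))) (.const 1)
    have h2 : Computable (fun p : (ℕ × ℕ × (ℕ × ℕ × ℕ)) × ℕ => 4 * p.1.2.2.2.2) :=
      mul_c (.const 4) (snd.comp (snd.comp (snd.comp (snd.comp fst))))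
    have h0 : Computable (fun p : (ℕ × ℕ × (ℕ × ℕ × ℕ)) × ℕ => decRaw p.2) := decRaw_comp.comp snd
    have h4 := (ltRaw_prim.to_comp).comp (h0.pair (h1.pair h2))
    exact h4
  have h4 := option_map hev h3.to₂
  exact h4

theorem nextSt_comp : Computable
    (fun p : (ℕ × (ℕ × ℕ × ℕ)) × Option Bool => nextSt p.1.1 p.1.2 p.2) := by
  have hK : Computable (fun p : (ℕ × (ℕ × ℕ × ℕ)) × Option Bool => 12 * (p.1.1 + 1)) :=
    mul_c (.const 12) (add_c (fst.comp fst) (.const 1))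
  have hH : Computable (fun p : (ℕ × (ℕ × ℕ × ℕ)) × Option Bool => 6 * (p.1.1 + 1)) :=
    mul_c (.const 6) (add_c (fst.comp fst) (.const 1))
  have hA : Computable (fun p : (ℕ × (ℕ × ℕ × ℕ)) × Option Bool => p.1.2.1 * (12 * (p.1.1 + 1))) :=
    mul_c (fst.comp (snd.comp fst)) hK
  have hB : Computable (fun p : (ℕ × (ℕ × ℕ × ℕ)) × Option Bool => p.1.2.2.1 * (12 * (p.1.1 + 1))) :=
    mul_c (fst.comp (snd.comp (snd.comp fst))) hK
  have hD : Computable (fun p : (ℕ × (ℕ × ℕ × ℕ)) × Option Bool => p.1.2.2.2 * (12 * (p.1.1 + 1))) :=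
    mul_c (snd.comp (snd.comp (snd.comp fst))) hK
  have hT := (((add_c hA hH).comp fst).pair (((add_c hB (.const 1)).comp fst).pair
    (hD.comp fst)) : Computable (fun x : ((ℕ × (ℕ × ℕ × ℕ)) × Option Bool) × Bool => _))
  have hF := (((add_c hA (.const 1)).comp fst).pair (((add_c hB hH).comp fst).pair
    (hD.comp fst)) : Computable (fun x : ((ℕ × (ℕ × ℕ × ℕ)) × Option Bool) × Bool => _))
  have hC := Computable.cond snd hT hF
  have hO := option_casesOn snd (hA.pair (hB.pair hD)) hC.to₂
  exact hO

theorem St_comp : Computable (fun s : ℕ => St s s) := by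
  refine Computable.nat_rec (f := fun s : ℕ => s) (g := fun _ => ((0, 0, 1) : ℕ × ℕ × ℕ))
    (h := fun s p => nextSt p.1 p.2 (outc s p.1 p.2)) Computable.id (.const _) ?_
  have h : Computable (fun x : ℕ × (ℕ × (ℕ × ℕ × ℕ)) =>
      nextSt x.2.1 x.2.2 (outc x.1 x.2.1 x.2.2)) :=
by
    have h1 := nextSt_comp.comp (snd.pair outc_comp)
    exact h1
  exact h.to₂
end comp

def Dn : ℕ → ℕ
  | 0 => 1
  | e + 1 => Dn e * (12 * (e + 1))

theorem Dn_pos : ∀ e, 0 < Dn e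
  | 0 => one_pos
  | e + 1 => Nat.mul_pos (Dn_pos e) (by omega)

theorem nextSt_d (e : ℕ) (st : ℕ × ℕ × ℕ) (o : Option Bool) :
    (nextSt e st o).2.2 = st.2.2 * (12 * (e + 1)) := by
  rcases o with _ | _ | _ <;> rfl

theorem St_d (s : ℕ) : ∀ e, (St s e).2.2 = Dn e
  | 0 => rfl
  | e + 1 => by rw [St_succ, nextSt_d, St_d s e]; rfl

def TT (e : ℕ) : ℚ := 1 / (Dn e : ℚ)

theorem TT_pos (e : ℕ) : 0 < TT e := by
  have := Dn_pos e
  unfold TT; positivity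

theorem TT_succ (e : ℕ) : TT e = 12 * ((e : ℚ) + 1) * TT (e + 1) := by
  have h : (Dn e : ℚ) ≠ 0 := by exact_mod_cast (Dn_pos e).ne'
  have h' : (e : ℚ) + 1 ≠ 0 := by positivity
  simp only [TT, Dn]
  push_cast
  field_simp

theorem TT_succ_le (e : ℕ) : 12 * TT (e + 1) ≤ TT e := by
  rw [TT_succ e]
  have := TT_pos (e + 1)
  have h : (0 : ℚ) ≤ e := by positivity
  nlinarith [mul_nonneg h this.le]

def val (w : Bool) (st : ℕ × ℕ × ℕ) : ℚ := ((cond w st.1 st.2.1 : ℕ) : ℚ) / (st.2.2 : ℚ)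

def inc (w : Bool) (e : ℕ) (o : Option Bool) : ℚ :=
  Option.casesOn o 0 (fun b => if b = w then TT e / 2 else TT (e + 1))

theorem val_next (w : Bool) (e : ℕ) (st : ℕ × ℕ × ℕ) (hd : st.2.2 = Dn e) (o : Option Bool) :
    val w (nextSt e st o) = val w st + inc w e o := by
  have h : (Dn e : ℚ) ≠ 0 := by exact_mod_cast (Dn_pos e).ne'
  have h' : (e : ℚ) + 1 ≠ 0 := by positivity
  have hT : TT (e + 1) = 1 / (Dn e * (12 * ((e : ℚ) + 1))) := by simp [TT, Dn]
  have hT' : TT e = 1 / Dn e := rfl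
  unfold val
  rw [nextSt_d, hd]
  rcases o with _ | _ | _ <;> cases w <;> simp [nextSt, inc, hT, hT'] <;> field_simp
  all_goals ring

theorem inc_nonneg (w : Bool) (e : ℕ) (o : Option Bool) : 0 ≤ inc w e o := by
  have h1 := TT_pos e
  have h2 := TT_pos (e + 1)
  rcases o with _ | b
  · exact le_rfl
  · simp only [inc]; split_ifs <;> linarith

theorem inc_le (w : Bool) (e : ℕ) (o : Option Bool) : inc w e o + TT (e + 1) ≤ TT e := by
  have h1 := TT_pos e
  have h2 := TT_pos (e + 1)
  have h3 := TT_succ_le e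
  rcases o with _ | b
  · simp only [inc]; linarith
  · simp only [inc]; split_ifs <;> linarith

theorem le_inc (w : Bool) (e : ℕ) (b : Bool) : TT (e + 1) ≤ inc w e (some b) := by
  have h1 := TT_pos e
  have h2 := TT_pos (e + 1)
  have h3 := TT_succ_le e
  simp only [inc]; split_ifs <;> linarith

theorem val_succ (w : Bool) (s e : ℕ) :
    val w (St s (e + 1)) = val w (St s e) + inc w e (outc s e (St s e)) := by
  rw [St_succ, val_next _ _ _ (St_d s e)]

theorem outc_mono {s t e : ℕ} {st : ℕ × ℕ × ℕ} {b : Bool} (h : s ≤ t)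
    (hb : outc s e st = some b) : outc t e st = some b := by
  unfold outc at hb ⊢
  rw [Option.map_eq_some_iff] at hb ⊢
  obtain ⟨n, hn, hb⟩ := hb
  exact ⟨n, Code.evaln_mono h hn, hb⟩

theorem val_mono (w : Bool) (s : ℕ) : Monotone (fun e => val w (St s e)) := by
  refine monotone_nat_of_le_succ fun e => ?_
  rw [val_succ]
  linarith [inc_nonneg w e (outc s e (St s e))]

theorem val_anti (w : Bool) (s : ℕ) : Antitone (fun e => val w (St s e) + TT e) := by
  refine antitone_nat_of_succ_le fun e => ?_
  rw [val_succ]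
  linarith [inc_le w e (outc s e (St s e))]

theorem compare_st {s t : ℕ} (h : s ≤ t) (e : ℕ) :
    St s e = St t e ∨ ∀ w, val w (St s e) + TT e ≤ val w (St t e) := by
  induction e with
  | zero => left; rfl
  | succ e ih =>
    rcases ih with ih | ih
    · rcases ho : outc s e (St s e) with _ | b
      · rcases ho' : outc t e (St t e) with _ | b'
        · left
          rw [St_succ, St_succ, ho, ho', ih]
        · right
          intro w
          rw [val_succ, val_succ, ho, ho', ih]
          have := le_inc w e b'
          simp only [inc] at this ⊢
          linarith
      · left
        have := outc_mono h ho
        rw [St_succ, St_succ, ho, ← ih, this]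
    · right
      intro w
      have h1 := val_anti w s (Nat.le_succ e)
      have h2 := val_mono w t (Nat.le_succ e)
      simp only [Nat.succ_eq_add_one] at h1 h2
      linarith [ih w]

def seqV (w : Bool) (s : ℕ) : ℚ := val w (St s s)

theorem seqV_comp (w : Bool) : Computable (seqV w) := by
  have h : Computable (fun s : ℕ => (cond w (St s s).1 (St s s).2.1, (St s s).2.2 - 1)) := by
    refine .pair ?_ (sub_c (Computable.snd.comp (Computable.snd.comp St_comp)) (.const 1))
    cases w
    · exact Computable.fst.comp (Computable.snd.comp St_comp)
    · exact Computable.fst.comp St_comp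
  refine (mkq_comp.comp h).of_eq fun s => ?_
  have h1 := Dn_pos s
  rw [← St_d s s] at h1
  simp only [mkq, seqV, val]
  rw [Nat.sub_add_cancel h1]

theorem seqV_mono (w : Bool) : Monotone (seqV w) := by
  intro s t h
  have h2 := val_mono w t h
  simp only at h2
  refine le_trans ?_ h2
  rcases compare_st h s with h1 | h1
  · rw [seqV, h1]
  · have := h1 w
    have := TT_pos s
    unfold seqV; linarith

theorem seqV_le (w : Bool) (s : ℕ) : seqV w s ≤ 1 := by
  have h := val_anti w s (Nat.zero_le s)
  have := TT_pos s
  simp [val, St, TT, Dn] at h this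
  simp only [seqV, val, St] at *
  have h0 : (0 : ℚ) ≤ ((Dn s : ℚ))⁻¹ := by positivity
  cases w <;> simp at h ⊢ <;> linarith

noncomputable def lim (w : Bool) : ℝ := ⨆ s, (seqV w s : ℝ)

theorem lim_tendsto (w : Bool) :
    Filter.Tendsto (fun n => (seqV w n : ℝ)) Filter.atTop (nhds (lim w)) := by
  refine tendsto_atTop_ciSup (fun s t h => by exact_mod_cast seqV_mono w h) ⟨1, ?_⟩
  rintro _ ⟨s, rfl⟩
  show (seqV w s : ℝ) ≤ 1
  exact_mod_cast seqV_le w s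

theorem lim_leftCE (w : Bool) : LeftCE (lim w) :=
  ⟨seqV w, seqV_comp w, seqV_mono w, lim_tendsto w⟩

theorem lim_bounds (w : Bool) (e s0 : ℕ) (st : ℕ × ℕ × ℕ) (h : ∀ s, s0 ≤ s → St s e = st) :
    ((val w st : ℚ) : ℝ) ≤ lim w ∧ lim w ≤ ((val w st + TT e : ℚ) : ℝ) := by
  constructor
  · refine ge_of_tendsto (lim_tendsto w) ?_
    filter_upwards [Filter.eventually_ge_atTop (max s0 e)] with s hs
    have := val_mono w s (le_of_max_le_right hs)
    simp only at this
    rw [h s (le_of_max_le_left hs)] at this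
    exact_mod_cast this
  · refine le_of_tendsto (lim_tendsto w) ?_
    filter_upwards [Filter.eventually_ge_atTop (max s0 e)] with s hs
    have := val_anti w s (le_of_max_le_right hs)
    simp only at this
    rw [h s (le_of_max_le_left hs)] at this
    have h2 := TT_pos s
    have h3 : seqV w s ≤ val w st + TT e := by unfold seqV; linarith
    exact_mod_cast h3

theorem stable (e : ℕ) : ∃ s0 st, ∀ s, s0 ≤ s → St s e = st := by
  induction e with
  | zero => exact ⟨0, (0, 0, 1), fun s _ => rfl⟩
  | succ e ih =>
    obtain ⟨s0, st, h⟩ := ih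
    by_cases hx : ∃ s1 b, outc s1 e st = some b
    · obtain ⟨s1, b, hb⟩ := hx
      refine ⟨max s0 s1, nextSt e st (some b), fun s hs => ?_⟩
      rw [St_succ, h s (le_of_max_le_left hs), outc_mono (le_of_max_le_right hs) hb]
    · push Not at hx
      refine ⟨s0, nextSt e st none, fun s hs => ?_⟩
      rw [St_succ, h s hs]
      rcases ho : outc s e st with _ | b
      · rfl
      · exact absurd ho (hx s b)

theorem exists_code_rat (f : ℚ → ℚ) (hf : Computable f) :
    ∃ c : Code, ∀ q, ratCode (f q) ∈ Code.eval c (ratCode q) := by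
  obtain ⟨c, hc⟩ := Code.exists_code.1 hf
  refine ⟨c, fun q => ?_⟩
  rw [hc]
  unfold ratCode
  simp only [Encodable.encodek]
  exact Part.mem_bind (Part.mem_some _) (Part.mem_map _ (Part.mem_some _))

theorem addition_not_upper_bound_totalSolovay :
    ∃ α β : ℝ, LeftCE α ∧ LeftCE β ∧ ¬ TotalSolovayReducible α (α + β) := by
  refine ⟨lim true, lim false, lim_leftCE _, lim_leftCE _, ?_⟩
  rintro ⟨c, hc, f, hf, H⟩
  obtain ⟨code, hcode⟩ := exists_code_rat f hf
  obtain ⟨N, hN⟩ := exists_nat_ge c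
  set e := Nat.pair (Encodable.encode code) N with he
  have hNe : (N : ℚ) ≤ e := by exact_mod_cast Nat.right_le_pair _ _
  obtain ⟨s0, st, hst⟩ := stable e
  obtain ⟨k, hk⟩ := Code.evaln_complete.1 (hcode (qOf st))
  have hd : st.2.2 = Dn e := by rw [← hst s0 le_rfl, St_d]
  have hout : outc k e st = some (ltRaw (ratRaw (f (qOf st))) (4 * st.1 + 1) (4 * st.2.2)) := by
    unfold outc
    rw [he, Nat.unpair_pair]
    simp only [Denumerable.ofNat_encode]
    rw [Option.mem_def] at hk
    rw [hk, Option.map_some, decRaw_code]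
  set b := ltRaw (ratRaw (f (qOf st))) (4 * st.1 + 1) (4 * st.2.2) with hb
  have hst' : ∀ s, max s0 k ≤ s → St s (e + 1) = nextSt e st (some b) := by
    intro s hs
    rw [St_succ, hst s (le_of_max_le_left hs), outc_mono (le_of_max_le_right hs) hout]
  have bA := lim_bounds true (e + 1) _ _ hst'
  have bB := lim_bounds false (e + 1) _ _ hst'
  rw [val_next _ _ _ hd] at bA bB
  have hD := Dn_pos e
  have hD0 : (Dn e : ℚ) ≠ 0 := by exact_mod_cast hD.ne'
  have hq : qOf st = val true st + val false st + TT e / 2 := by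
    unfold qOf mkq val TT
    rw [hd, Nat.sub_add_cancel (by omega)]
    simp only [cond_true, cond_false]
    push_cast
    field_simp
    try ring
  have hthr : (((4 * st.1 + 1 : ℕ) : ℚ)) / ((4 * st.2.2 : ℕ) : ℚ) = val true st + TT e / 4 := by
    unfold val TT
    rw [hd]
    simp only [cond_true]
    push_cast
    field_simp
    try ring
  have hlt := ltRaw_iff (f (qOf st)) (4 * st.1 + 1) (4 * st.2.2) (by omega)
  rw [← hb, hthr] at hlt
  have hTp := TT_pos (e + 1)
  have hT12 := TT_succ_le e
  have hTc : 12 * c * TT (e + 1) ≤ TT e := by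
    rw [TT_succ e]
    have : c ≤ (e : ℚ) + 1 := by linarith
    nlinarith [mul_le_mul_of_nonneg_right this hTp.le]
  have hqR : ((qOf st : ℚ) : ℝ) = val true st + val false st + TT e / 2 := by rw [hq]; push_cast; rfl
  have hTpR : (0 : ℝ) < (TT (e + 1) : ℝ) := by exact_mod_cast hTp
  have hT12R : (12 : ℝ) * (TT (e + 1) : ℝ) ≤ (TT e : ℝ) := by exact_mod_cast hT12
  have hTcR : (12 : ℝ) * c * (TT (e + 1) : ℝ) ≤ (TT e : ℝ) := by exact_mod_cast hTc
  have hcR : (0 : ℝ) < (c : ℝ) := by exact_mod_cast hc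
  obtain ⟨a1, a2⟩ := bA
  obtain ⟨b1, b2⟩ := bB
  cases hbv : b with
  | true =>
    rw [hbv] at hlt a1 a2 b1 b2
    have hf1 : f (qOf st) < val true st + TT e / 4 := hlt.1 rfl
    have hf2 : ((f (qOf st) : ℚ) : ℝ) < val true st + TT e / 4 := by exact_mod_cast hf1
    simp [inc] at a1 a2 b1 b2
    obtain ⟨h1, h2⟩ := H (qOf st) (by rw [hqR]; linarith)
    rw [hqR] at h2
    have h3 : lim true + lim false - (val true st + val false st + TT e / 2) ≤
      3 * (TT (e + 1) : ℝ) := by linarith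
    have h4 := mul_le_mul_of_nonneg_left h3 hcR.le
    nlinarith
  | false =>
    rw [hbv] at hlt a1 a2 b1 b2
    have hf1 : val true st + TT e / 4 ≤ f (qOf st) := by
      by_contra hcon
      have := hlt.2 (not_le.1 hcon)
      simp at this
    have hf2 : (val true st : ℝ) + TT e / 4 ≤ ((f (qOf st) : ℚ) : ℝ) := by exact_mod_cast hf1
    simp [inc] at a1 a2 b1 b2
    obtain ⟨h1, h2⟩ := H (qOf st) (by rw [hqR]; linarith)
    linarith
end

section
/- Every speedable left-c.e. real is ρ-speedable for every real ρ ∈ (0,1) with respect to every one of its left approximations; that is, if a left-c.e. real α is ρ₀-speedable with respect to some left approximation for some ρ₀ ∈ (0,1), then for every ρ ∈ (0,1) and every left approximation (a_n) of α there is a computable speed-up function f with liminf_{n→∞} (α − a_{f(n)})/(α − a_n) ≤ ρ. -/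
/-- A left approximation of `α`: a computable nondecreasing sequence of rationals,
all below `α`, converging to `α`. -/
def LeftApprox (a : ℕ → ℚ) (α : ℝ) : Prop :=
  Computable a ∧ Monotone a ∧ (∀ n, (a n : ℝ) < α) ∧
    Filter.Tendsto (fun n => (a n : ℝ)) Filter.atTop (nhds α)

/-- A speed-up function: a nondecreasing computable function with `n ≤ f n`. -/
def SpeedupFun (f : ℕ → ℕ) : Prop :=
  Computable f ∧ Monotone f ∧ ∀ n, n ≤ f n

/-- `α` is `ρ`-speedable with respect to the left approximation `a`. -/
def RhoSpeedableWrt (α ρ : ℝ) (a : ℕ → ℚ) : Prop :=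
  ∃ f : ℕ → ℕ, SpeedupFun f ∧
    Filter.liminf (fun n => (α - (a (f n) : ℝ)) / (α - (a n : ℝ))) Filter.atTop ≤ ρ

/-- `α` is speedable: `ρ`-speedable with respect to some left approximation
for some `ρ ∈ (0,1)`. -/
def Speedable (α : ℝ) : Prop :=
  ∃ ρ : ℝ, ρ ∈ Set.Ioo (0 : ℝ) 1 ∧ ∃ a : ℕ → ℚ, LeftApprox a α ∧ RhoSpeedableWrt α ρ a

namespace Spd

open Encodable

/-- The explicit code of a rational. -/
def E (q : ℚ) : ℕ := Nat.pair (Equiv.intEquivNat q.num) q.den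

theorem intEquiv_ofNat (k : ℕ) : Equiv.intEquivNat (Int.ofNat k) = 2 * k := rfl
theorem intEquiv_neg (k : ℕ) : Equiv.intEquivNat (Int.negSucc k) = 2 * k + 1 := rfl

theorem natAbs_eq (z : ℤ) : z.natAbs = (Equiv.intEquivNat z + 1) / 2 := by
  cases z with
  | ofNat k => rw [intEquiv_ofNat]; simp; omega
  | negSucc k => rw [intEquiv_neg]; simp; omega

theorem mem_range_E (m : ℕ) : m ∈ Set.range E ↔
    0 < m.unpair.2 ∧ Nat.findGreatest (fun k => m.unpair.2 % k = 0 ∧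
      ((m.unpair.1 + 1) / 2) % k = 0) m.unpair.2 = 1 := by
  have key : ∀ x d : ℕ, 0 < d →
      (Nat.findGreatest (fun k => d % k = 0 ∧ x % k = 0) d = 1 ↔ x.Coprime d) := by
    intro x d hd
    have : Nat.findGreatest (fun k => d % k = 0 ∧ x % k = 0) d = Nat.gcd x d := by
      rw [Nat.findGreatest_eq_iff]
      refine ⟨Nat.gcd_le_right _ hd, fun _ => ⟨Nat.mod_eq_zero_of_dvd (Nat.gcd_dvd_right _ _),
        Nat.mod_eq_zero_of_dvd (Nat.gcd_dvd_left _ _)⟩, ?_⟩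
      rintro n hn _ ⟨h1, h2⟩
      have := Nat.dvd_gcd (Nat.dvd_of_mod_eq_zero h2) (Nat.dvd_of_mod_eq_zero h1)
      have := Nat.le_of_dvd (Nat.gcd_pos_of_pos_right _ hd) this
      omega
    rw [this]
  constructor
  · rintro ⟨q, rfl⟩
    simp only [E, Nat.unpair_pair]
    refine ⟨q.den_pos, ?_⟩
    rw [key _ _ q.den_pos, ← natAbs_eq]
    exact q.reduced
  · rintro ⟨h1, h2⟩
    rw [key _ _ h1] at h2
    refine ⟨⟨Equiv.intEquivNat.symm m.unpair.1, m.unpair.2, h1.ne', ?_⟩, ?_⟩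
    · rw [natAbs_eq]; simpa using h2
    · simp [E]

theorem range_pred : PrimrecPred (fun m => m ∈ Set.range E) := by
  have hu1 : Primrec fun m : ℕ => m.unpair.1 := Primrec.fst.comp Primrec.unpair
  have hu2 : Primrec fun m : ℕ => m.unpair.2 := Primrec.snd.comp Primrec.unpair
  have hh : Primrec fun m : ℕ => (m.unpair.1 + 1) / 2 :=
    Primrec.nat_div.comp (Primrec.succ.comp hu1) (Primrec.const 2)
  have hrel : PrimrecRel (fun (m k : ℕ) => m.unpair.2 % k = 0 ∧
      ((m.unpair.1 + 1) / 2) % k = 0) := by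
    apply PrimrecPred.and
    · exact Primrec.eq.comp (Primrec.nat_mod.comp (hu2.comp Primrec.fst) Primrec.snd)
        (Primrec.const 0)
    · exact Primrec.eq.comp (Primrec.nat_mod.comp (hh.comp Primrec.fst) Primrec.snd)
        (Primrec.const 0)
  refine PrimrecPred.of_eq (p := fun m : ℕ => 0 < m.unpair.2 ∧
    Nat.findGreatest (fun k => m.unpair.2 % k = 0 ∧
      ((m.unpair.1 + 1) / 2) % k = 0) m.unpair.2 = 1) ?_ (fun m => (mem_range_E m).symm)
  exact (Primrec.nat_lt.comp (Primrec.const 0) hu2).and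
    (Primrec.eq.comp (Primrec.nat_findGreatest hu2 hrel) (Primrec.const 1))

theorem E_inj : Function.Injective E := by
  have := @encode_injective ℚ Rat.instEncodable
  exact this

theorem range_inf : (Set.range E).Infinite := Set.infinite_range_of_injective E_inj

theorem ex_next (x : ℕ) : ∃ m, x + m + 1 ∈ Set.range E := by
  obtain ⟨y, hy, hxy⟩ := range_inf.exists_gt x
  exact ⟨y - x - 1, by convert hy using 1; omega⟩

theorem E_eq [DecidablePred (· ∈ Set.range E)] [Infinite (Set.range E)] (q : ℚ) :
    E q = (Nat.Subtype.ofNat (Set.range E) (@encode ℚ Primcodable.toEncodable q)).val := by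
  have h := Denumerable.ofNat_encode (α := ℚ) q
  have h2 : ∀ n, E (Denumerable.ofNat ℚ n) = (Nat.Subtype.ofNat (Set.range E) n).val := by
    intro n
    have hi : ‹DecidablePred (· ∈ Set.range E)› =
      @decidableRangeEncode ℚ Rat.instEncodable := Subsingleton.elim _ _
    subst hi
    let y : Set.range E := @Nat.Subtype.ofNat (Set.range E)
      (@decidableRangeEncode ℚ Rat.instEncodable) _ n
    have hy : Denumerable.ofNat ℚ n = (@equivRangeEncode ℚ Rat.instEncodable).symm y := rfl
    rw [hy]
    exact congrArg Subtype.val ((@equivRangeEncode ℚ Rat.instEncodable).apply_symm_apply y)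
  conv_lhs => rw [← h]
  exact h2 _

theorem E_comp : Computable E := by
  classical
  have : Infinite (Set.range E) := range_inf.to_subtype
  have hn : Computable (fun x => Nat.find (ex_next x)) := by
    apply Computable.find
    have : PrimrecPred (fun p : ℕ × ℕ => p.1 + p.2 + 1 ∈ Set.range E) :=
      range_pred.comp (Primrec.succ.comp (Primrec.nat_add.comp Primrec.fst Primrec.snd))
    exact this.computablePred
  have hG : Computable (fun n => (Nat.Subtype.ofNat (Set.range E) n).val) := by
    have := Computable.nat_rec (f := fun n : ℕ => n)
      (g := fun _ : ℕ => (Nat.Subtype.ofNat (Set.range E) 0).val)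
      (h := fun _ p => p.2 + Nat.find (ex_next p.2) + 1) Computable.id (Computable.const _)
      (by
        have h2 : Computable (fun p : ℕ × ℕ × ℕ => p.2.2) := Computable.snd.comp Computable.snd
        exact Computable.succ.comp (Primrec.nat_add.to_comp.comp h2 (hn.comp h2)))
    refine this.of_eq fun n => ?_
    induction n with
    | zero => rfl
    | succ k ih =>
      simp only [] at ih ⊢
      rw [ih]
      rfl
  exact (hG.comp Computable.encode).of_eq fun q => (E_eq q).symm

theorem parts : ∃ P N D : ℚ → ℕ, Computable P ∧ Computable N ∧ Computable D ∧
    ∀ q, 0 < D q ∧ q * D q = P q - N q := by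
  have h1 : Computable (fun q => (E q).unpair.1) :=
    (Primrec.fst.comp Primrec.unpair).to_comp.comp E_comp
  have h2 : Computable (fun q => (E q).unpair.2) :=
    (Primrec.snd.comp Primrec.unpair).to_comp.comp E_comp
  have p1 : Primrec (fun i : ℕ => if i % 2 = 0 then i / 2 else 0) :=
    Primrec.ite (Primrec.eq.comp (Primrec.nat_mod.comp Primrec.id (Primrec.const 2))
      (Primrec.const 0)) (Primrec.nat_div.comp Primrec.id (Primrec.const 2)) (Primrec.const 0)
  have p2 : Primrec (fun i : ℕ => if i % 2 = 0 then 0 else (i + 1) / 2) :=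
    Primrec.ite (Primrec.eq.comp (Primrec.nat_mod.comp Primrec.id (Primrec.const 2))
      (Primrec.const 0)) (Primrec.const 0)
      (Primrec.nat_div.comp Primrec.succ (Primrec.const 2))
  refine ⟨_, _, _, p1.to_comp.comp h1, p2.to_comp.comp h1, h2, fun q => ?_⟩
  simp only [E, Nat.unpair_pair]
  refine ⟨q.den_pos, ?_⟩
  rw [Rat.mul_den_eq_num]
  cases q.num with
  | ofNat k => rw [intEquiv_ofNat]; simp
  | negSucc k =>
    rw [intEquiv_neg]
    have : (2 * k + 1) % 2 ≠ 0 := by omega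
    have h3 : (2 * k + 1 + 1) / 2 = k + 1 := by omega
    rw [if_neg this, if_neg this, h3]
    simp [Int.negSucc_eq]

theorem cmp {β : Type*} [Primcodable β] (K M L : ℕ) {f g h : β → ℚ} (hf : Computable f)
    (hg : Computable g) (hh : Computable h) :
    ComputablePred (fun b => (L : ℚ) * h b < K * f b + M * g b) := by
  obtain ⟨P, N, D, cP, cN, cD, H⟩ := parts
  have mul : ∀ {u v : β → ℕ}, Computable u → Computable v → Computable (fun b => u b * v b) :=
    fun hu hv => Primrec.nat_mul.to_comp.comp hu hv
  have add : ∀ {u v : β → ℕ}, Computable u → Computable v → Computable (fun b => u b + v b) :=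
    fun hu hv => Primrec.nat_add.to_comp.comp hu hv
  have term : ∀ (c : ℕ) {u v w : β → ℕ}, Computable u → Computable v → Computable w →
      Computable (fun b => c * (u b * v b * w b)) :=
    fun c _ _ _ hu hv hw => mul (Computable.const c) (mul (mul hu hv) hw)
  have c1 := add (add (term K (cN.comp hf) (cD.comp hg) (cD.comp hh))
    (term M (cN.comp hg) (cD.comp hf) (cD.comp hh)))
    (term L (cP.comp hh) (cD.comp hf) (cD.comp hg))
  have c2 := add (add (term K (cP.comp hf) (cD.comp hg) (cD.comp hh))
    (term M (cP.comp hg) (cD.comp hf) (cD.comp hh)))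
    (term L (cN.comp hh) (cD.comp hf) (cD.comp hg))
  have lt : ComputablePred (fun p : ℕ × ℕ => p.1 < p.2) :=
    PrimrecPred.computablePred (Primrec.nat_lt.comp Primrec.fst Primrec.snd)
  have := ComputablePred.computable_iff.1 lt
  obtain ⟨d, hd, hd'⟩ := this
  have fin : ComputablePred (fun b => d (_, _) = true) :=
    ComputablePred.computable_iff.2 ⟨_, hd.comp (c1.pair c2), rfl⟩
  refine fin.of_eq fun b => ?_
  rw [← congrFun hd' (_, _)]
  simp only []
  obtain ⟨hx, ex⟩ := H (f b)
  obtain ⟨hy, ey⟩ := H (g b)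
  obtain ⟨hz, ez⟩ := H (h b)
  have hx' : (0 : ℚ) < D (f b) := by exact_mod_cast hx
  have hy' : (0 : ℚ) < D (g b) := by exact_mod_cast hy
  have hz' : (0 : ℚ) < D (h b) := by exact_mod_cast hz
  have hpos : (0 : ℚ) < D (f b) * D (g b) * D (h b) := by positivity
  rw [← mul_lt_mul_iff_left₀ hpos, ← Nat.cast_lt (α := ℚ)]
  push_cast
  have e1 : (L : ℚ) * h b * (D (f b) * D (g b) * D (h b))
    = L * ((P (h b) - N (h b)) * D (f b) * D (g b)) := by rw [← ez]; ring
  have e2 : ((K : ℚ) * f b + M * g b) * (D (f b) * D (g b) * D (h b))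
    = K * ((P (f b) - N (f b)) * D (g b) * D (h b)) +
      M * ((P (g b) - N (g b)) * D (f b) * D (h b)) := by rw [← ex, ← ey]; ring
  rw [e1, e2]
  constructor <;> intro h <;> linarith

theorem mono {g : ℕ → ℕ} (hg : Computable g) : ∃ F, SpeedupFun F ∧ ∀ n, g n ≤ F n := by
  let F : ℕ → ℕ := fun n => Nat.rec (g 0) (fun k y => y + g (k + 1) + 1) n
  have hs : ∀ n, F (n + 1) = F n + g (n + 1) + 1 := fun n => rfl
  refine ⟨F, ⟨?_, ?_, ?_⟩, ?_⟩
  · exact Computable.nat_rec (f := fun n : ℕ => n) (g := fun _ : ℕ => g 0)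
      (h := fun _ p => p.2 + g (p.1 + 1) + 1) Computable.id (Computable.const _)
      (Computable.succ.comp (Primrec.nat_add.to_comp.comp (Computable.snd.comp Computable.snd)
        (hg.comp (Computable.succ.comp (Computable.fst.comp Computable.snd)))))
  · exact monotone_nat_of_le_succ fun n => by rw [hs]; omega
  · intro n
    induction n with
    | zero => exact Nat.zero_le _
    | succ k ih => rw [hs]; omega
  · intro n
    cases n with
    | zero => exact le_rfl
    | succ k => rw [hs]; omega

/-- Good speed-up with factor `K / M`. -/
def Good (α : ℝ) (a : ℕ → ℚ) (K M : ℕ) : Prop :=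
  ∃ F, SpeedupFun F ∧ ∃ᶠ n in Filter.atTop, (K : ℝ) * (α - a (F n)) ≤ M * (a (F n) - a n)

theorem good_of {α : ℝ} {a : ℕ → ℚ} {K M : ℕ} (ha : LeftApprox a α) {g : ℕ → ℕ}
    (hg : Computable g)
    (h : ∃ᶠ n in Filter.atTop, (K : ℝ) * (α - a (g n)) ≤ M * (a (g n) - a n)) :
    Good α a K M := by
  obtain ⟨F, hF, hgF⟩ := mono hg
  refine ⟨F, hF, h.mono fun n hn => ?_⟩
  have : (a (g n) : ℝ) ≤ a (F n) := by exact_mod_cast ha.2.1 (hgF n)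
  calc (K : ℝ) * (α - a (F n)) ≤ K * (α - a (g n)) := by gcongr
    _ ≤ M * (a (g n) - a n) := hn
    _ ≤ _ := by gcongr

theorem ex_gt {α : ℝ} {a : ℕ → ℚ} (ha : LeftApprox a α) {x : ℝ} (hx : x < α) :
    ∃ n, x < a n :=
  (ha.2.2.2.eventually_const_lt hx).exists

theorem double {α : ℝ} {a : ℕ → ℚ} {K M : ℕ} (ha : LeftApprox a α) (hK : 0 < K)
    (h : Good α a K M) : Good α a (2 * K) M := by
  classical
  obtain ⟨F, hF, h⟩ := h
  by_cases hc : ∃ᶠ n in Filter.atTop,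
      ((2 * K : ℕ) : ℝ) * (α - a (F n)) ≤ M * (a (F n) - a n)
  · exact ⟨F, hF, hc⟩
  rw [Filter.not_frequently, Filter.eventually_atTop] at hc
  obtain ⟨N, hN⟩ := hc
  have hK' : (0 : ℝ) < K := by exact_mod_cast hK
  have ex : ∀ n, ∃ s, ((2 * K + M : ℕ) : ℚ) * a (F (max n N)) <
      (2 * K : ℕ) * a s + M * a (max n N) := by
    intro n
    have := hN (max n N) (le_max_right _ _)
    push_cast at this
    obtain ⟨s, hs⟩ := ex_gt ha (x := a (F (max n N)) +
      M * (a (F (max n N)) - a (max n N)) / (2 * K)) (by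
        rw [← lt_sub_iff_add_lt', div_lt_iff₀ (by positivity)]; linarith)
    refine ⟨s, ?_⟩
    rw [← lt_sub_iff_add_lt', div_lt_iff₀ (by positivity)] at hs
    have : (((2 * K + M : ℕ) : ℚ) : ℝ) * a (F (max n N)) <
      ((2 * K : ℕ) : ℚ) * a s + (M : ℚ) * a (max n N) := by push_cast; linarith
    exact_mod_cast this
  have hmax : Computable (fun n => max n N) :=
    Primrec.nat_max.to_comp.comp Computable.id (Computable.const N)
  have hcomp : Computable (fun n => Nat.find (ex n)) := by
    apply Computable.find
    exact cmp (β := ℕ × ℕ) (2 * K) M (2 * K + M) (ha.1.comp Computable.snd)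
      (ha.1.comp (hmax.comp Computable.fst))
      (ha.1.comp (hF.1.comp (hmax.comp Computable.fst)))
  refine good_of ha hcomp ?_
  refine (h.and_eventually (Filter.eventually_ge_atTop N)).mono ?_
  rintro n ⟨hn, hnN⟩
  have hs := Nat.find_spec (ex n)
  generalize Nat.find (ex n) = s at hs
  rw [max_eq_left hnN] at hs
  have hs' : (((2 * K + M : ℕ) : ℚ) : ℝ) * a (F n) <
      ((2 * K : ℕ) : ℚ) * a s + (M : ℚ) * a n := by exact_mod_cast hs
  have hle : (a n : ℝ) ≤ a (F n) := by exact_mod_cast ha.2.1 (hF.2.2 n)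
  have hle2 : (a (F n) : ℝ) ≤ a s := by
    by_contra hlt
    push Not at hlt
    push_cast at hs'
    have h1 : (K : ℝ) * a s ≤ K * a (F n) := by gcongr
    have h2 : (M : ℝ) * a n ≤ M * a (F n) := by gcongr
    linarith
  have h3 : (M : ℝ) * a (F n) ≤ M * a s := by gcongr
  push_cast at hs' ⊢
  linarith

theorem transfer {α : ℝ} {a b : ℕ → ℚ} {K M : ℕ} (ha : LeftApprox a α) (hb : LeftApprox b α)
    (h : Good α a K M) : Good α b K M := by
  classical
  obtain ⟨f, hf, h⟩ := h
  have ex1 : ∀ n, ∃ m, ((1 : ℕ) : ℚ) * b n < (1 : ℕ) * a m + (0 : ℕ) * a m := by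
    intro n
    obtain ⟨m, hm⟩ := ex_gt ha (hb.2.2.1 n)
    exact ⟨m, by simpa using (by exact_mod_cast hm : b n < a m)⟩
  have ex2 : ∀ n, ∃ m, ((1 : ℕ) : ℚ) * a n < (1 : ℕ) * b m + (0 : ℕ) * b m := by
    intro n
    obtain ⟨m, hm⟩ := ex_gt hb (ha.2.2.1 n)
    exact ⟨m, by simpa using (by exact_mod_cast hm : a n < b m)⟩
  have c1 : Computable (fun n => Nat.find (ex1 n)) := by
    apply Computable.find
    exact cmp (β := ℕ × ℕ) 1 0 1 (ha.1.comp Computable.snd) (ha.1.comp Computable.snd)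
      (hb.1.comp Computable.fst)
  have c2 : Computable (fun n => Nat.find (ex2 n)) := by
    apply Computable.find
    exact cmp (β := ℕ × ℕ) 1 0 1 (hb.1.comp Computable.snd) (hb.1.comp Computable.snd)
      (ha.1.comp Computable.fst)
  have s1 : ∀ n, b n < a (Nat.find (ex1 n)) := fun n => by simpa using Nat.find_spec (ex1 n)
  have s2 : ∀ n, a n < b (Nat.find (ex2 n)) := fun n => by simpa using Nat.find_spec (ex2 n)
  revert c1 c2
  generalize hu : (fun n => Nat.find (ex1 n)) = u
  generalize hv : (fun n => Nat.find (ex2 n)) = v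
  intro c1 c2
  replace s1 : ∀ n, b n < a (u n) := by subst hu; exact s1
  replace s2 : ∀ n, a n < b (v n) := by subst hv; exact s2
  refine good_of hb (g := fun n => v (f (u (n + 1))))
    (c2.comp (hf.1.comp (c1.comp Computable.succ))) ?_
  rw [Filter.frequently_atTop]
  intro N
  have hev := ha.2.2.2.eventually_const_lt (hb.2.2.1 N)
  obtain ⟨m, hm, hNm⟩ := (h.and_eventually hev).exists
  have exk : ∃ k, a m ≤ b k := ⟨v m, (s2 m).le⟩
  obtain ⟨k, hk⟩ : ∃ k, k = Nat.find exk := ⟨_, rfl⟩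
  have hk1 : a m ≤ b k := hk ▸ Nat.find_spec exk
  have hNm' : b N < a m := by exact_mod_cast hNm
  have hNk : N < k := by
    by_contra hlt
    have := hb.2.1 (not_lt.1 hlt)
    exact absurd (hNm'.trans_le hk1) (not_lt.2 this)
  obtain ⟨n, rfl⟩ : ∃ n, k = n + 1 := ⟨k - 1, by omega⟩
  have hn : b n < a m := not_le.1 (Nat.find_min exk (by omega))
  refine ⟨n, by omega, ?_⟩
  have hmu : m ≤ u (n + 1) := by
    by_contra hlt
    have := ha.2.1 (not_le.1 hlt).le
    exact absurd (hk1.trans_lt (s1 (n + 1))) (not_lt.2 this)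
  have h4 : a (f m) ≤ b (v (f (u (n + 1)))) :=
    (ha.2.1 (hf.2.1 hmu)).trans (s2 _).le
  have h4' : (a (f m) : ℝ) ≤ b (v (f (u (n + 1)))) := by exact_mod_cast h4
  have hn' : (b n : ℝ) ≤ a m := by exact_mod_cast hn.le
  calc (K : ℝ) * (α - b (v (f (u (n + 1))))) ≤ K * (α - a (f m)) := by gcongr
    _ ≤ M * (a (f m) - a m) := hm
    _ ≤ _ := by gcongr

end Spd

open Spd in
theorem speedable_independent_of_rho_and_approx (α : ℝ) (h : Speedable α)
    (ρ : ℝ) (hρ : ρ ∈ Set.Ioo (0 : ℝ) 1) (a : ℕ → ℚ) (ha : LeftApprox a α) :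
    RhoSpeedableWrt α ρ a := by
  obtain ⟨ρ₀, ⟨h0, h1⟩, a₀, ha₀, f, hf, hlim⟩ := h
  have bnd : ∀ {b : ℕ → ℚ} {F : ℕ → ℕ}, LeftApprox b α → ∀ n,
      0 ≤ (α - (b (F n) : ℝ)) / (α - b n) := fun hb n =>
    div_nonneg (sub_nonneg.2 (hb.2.2.1 _).le) (sub_nonneg.2 (hb.2.2.1 _).le)
  have bnd1 : ∀ n, (α - (a₀ (f n) : ℝ)) / (α - a₀ n) ≤ 1 := fun n => by
    rw [div_le_one (sub_pos.2 (ha₀.2.2.1 _))]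
    have : (a₀ n : ℝ) ≤ a₀ (f n) := by exact_mod_cast ha₀.2.1 (hf.2.2 n)
    linarith
  have hfr := Filter.frequently_lt_of_liminf_lt (b := (1 + ρ₀) / 2)
    (Filter.IsBoundedUnder.isCoboundedUnder_ge ⟨1, by simpa using ⟨0, fun n _ => bnd1 n⟩⟩)
    (lt_of_le_of_lt hlim (by linarith))
  obtain ⟨M, hM⟩ := exists_nat_gt (1 / ((1 - ρ₀) / 2))
  have hpos : 0 < (1 - ρ₀) / 2 := by linarith
  rw [div_lt_iff₀ hpos] at hM
  have g0 : Good α a₀ 1 M := by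
    refine ⟨f, hf, hfr.mono fun n hn => ?_⟩
    have hp := sub_pos.2 (ha₀.2.2.1 n)
    have hp2 := sub_pos.2 (ha₀.2.2.1 (f n))
    rw [div_lt_iff₀ hp] at hn
    have : (a₀ n : ℝ) ≤ a₀ (f n) := by exact_mod_cast ha₀.2.1 (hf.2.2 n)
    have h5 : (1 - ρ₀) / 2 * (α - a₀ (f n)) ≤ a₀ (f n) - a₀ n := by nlinarith
    have h6 : (M : ℝ) * ((1 - ρ₀) / 2 * (α - a₀ (f n))) ≤ M * (a₀ (f n) - a₀ n) := by gcongr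
    push_cast
    nlinarith
  have g1 : ∀ k, Good α a (2 ^ k) M := by
    intro k
    induction k with
    | zero => simpa using transfer ha₀ ha g0
    | succ k ih => rw [pow_succ']; exact double ha (by positivity) ih
  obtain ⟨k, hk⟩ := pow_unbounded_of_one_lt ((M : ℝ) / ρ) (one_lt_two)
  obtain ⟨F, hF, hfr⟩ := g1 k
  refine ⟨F, hF, Filter.liminf_le_of_frequently_le (hfr.mono fun n hn => ?_)
    ⟨0, by simpa using ⟨0, fun n _ => bnd ha n⟩⟩⟩
  rw [div_le_iff₀ (sub_pos.2 (ha.2.2.1 n))]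
  rw [div_lt_iff₀ hρ.1] at hk
  have hp := sub_pos.2 (ha.2.2.1 n)
  have hp2 := sub_pos.2 (ha.2.2.1 (F n))
  push_cast at hn
  have h7 : (M : ℝ) * (a (F n) - a n) ≤ M * (α - a n) := by gcongr; linarith
  have h8 : (M : ℝ) * (α - a n) ≤ 2 ^ k * ρ * (α - a n) := by gcongr
  have h9 : (2 : ℝ) ^ k * (α - a (F n)) ≤ 2 ^ k * (ρ * (α - a n)) := by linarith
  exact le_of_mul_le_mul_left h9 (by positivity)
end
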